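/- arXiv:0705.4253 — 4 statements merged into one kernel-verified Lean document; each statement's English description precedes it below -/
import Mathlib

section
/- Consider a general separable convex program whose objective F is (λ,w)-scaled diagonally dominant, and suppose that each pair of distinct vertices i, j ∈ V participates in at most one common factor, i.e. |{C ∈ 𝒞 : {i,j} ⊆ C}| ≤ 1 for all i ≠ j. Run the factor-graph min-sum algorithm with initial messages satisfying the factor initialization assumption. Then for every t ≥ 0, ‖x^{(t)} − x*‖_∞ ≤ K · (λ^t/(1−λ)) · Σ_{C∈𝒞} Σ_{v∈C} | (J^{(0)}_{C→v})'(x*_v) − ∂f_C/∂x_v(x*_C) |; in particular x^{(t)} → x* as t → ∞. -/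
open Filter Finset

/-- Partial derivative of `F : (ι → ℝ) → ℝ` in coordinate `i` at `x`. -/
noncomputable def pd {ι : Type*} [DecidableEq ι] (F : (ι → ℝ) → ℝ) (i : ι) (x : ι → ℝ) : ℝ :=
  deriv (fun y => F (Function.update x i y)) (x i)

/-- Second partial derivative `∂²F/∂x_i∂x_j` of `F : (ι → ℝ) → ℝ` at `x`. -/
noncomputable def pd2 {ι : Type*} [DecidableEq ι] (F : (ι → ℝ) → ℝ) (i j : ι) (x : ι → ℝ) : ℝ :=
  pd (pd F j) i x

section MinSumHelpers

set_option linter.unusedSectionVars false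

variable {V : Type*} [Fintype V] [DecidableEq V]

theorem ms_pd_hasDerivAt {F : (V → ℝ) → ℝ} (hF : Differentiable ℝ F) (i : V) (x : V → ℝ) :
    HasDerivAt (fun y => F (Function.update x i y)) (fderiv ℝ F x (Pi.single i 1)) (x i) := by
  have h1 := hasDerivAt_update x i (x i)
  have h2 : HasFDerivAt F (fderiv ℝ F x) (Function.update x i (x i)) := by
    rw [Function.update_eq_self]; exact (hF x).hasFDerivAt
  exact h2.comp_hasDerivAt (x i) h1

theorem ms_pd_eq {F : (V → ℝ) → ℝ} (hF : Differentiable ℝ F) (i : V) :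
    pd F i = fun x => fderiv ℝ F x (Pi.single i 1) := by
  funext x
  exact (ms_pd_hasDerivAt hF i x).deriv

theorem ms_pd_contDiff {F : (V → ℝ) → ℝ} (hF : ContDiff ℝ 2 F) (i : V) :
    ContDiff ℝ 1 (pd F i) := by
  rw [ms_pd_eq (hF.differentiable (by norm_num))]
  exact (hF.fderiv_right (m := 1) (by norm_num)).clm_apply contDiff_const

theorem ms_pd_add {F G : (V → ℝ) → ℝ} (hF : Differentiable ℝ F) (hG : Differentiable ℝ G) (i : V) :
    pd (fun x => F x + G x) i = fun x => pd F i x + pd G i x := by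
  rw [ms_pd_eq (hF.fun_add hG), ms_pd_eq hF, ms_pd_eq hG]
  funext x
  rw [fderiv_fun_add (hF x) (hG x)]; rfl

theorem ms_pd_sum {ι : Type*} (s : Finset ι) {F : ι → (V → ℝ) → ℝ}
    (hF : ∀ a ∈ s, Differentiable ℝ (F a)) (i : V) :
    pd (fun x => ∑ a ∈ s, F a x) i = fun x => ∑ a ∈ s, pd (F a) i x := by
  have h : Differentiable ℝ (fun x => ∑ a ∈ s, F a x) := Differentiable.fun_sum hF
  rw [ms_pd_eq h]
  funext x
  rw [fderiv_fun_sum (fun a ha => hF a ha x)]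
  simp only [_root_.sum_apply]
  exact Finset.sum_congr rfl fun a ha => by rw [ms_pd_eq (hF a ha)]

theorem ms_pd2_add {F G : (V → ℝ) → ℝ} (hF : ContDiff ℝ 2 F) (hG : ContDiff ℝ 2 G) (i j : V)
    (x : V → ℝ) :
    pd2 (fun x => F x + G x) i j x = pd2 F i j x + pd2 G i j x := by
  unfold pd2
  rw [ms_pd_add (hF.differentiable (by norm_num)) (hG.differentiable (by norm_num)),
    ms_pd_add ((ms_pd_contDiff hF j).differentiable (by norm_num))
      ((ms_pd_contDiff hG j).differentiable (by norm_num))]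

theorem ms_pd2_sum {ι : Type*} (s : Finset ι) {F : ι → (V → ℝ) → ℝ}
    (hF : ∀ a ∈ s, ContDiff ℝ 2 (F a)) (i j : V) (x : V → ℝ) :
    pd2 (fun x => ∑ a ∈ s, F a x) i j x = ∑ a ∈ s, pd2 (F a) i j x := by
  unfold pd2
  rw [ms_pd_sum s (fun a ha => (hF a ha).differentiable (by norm_num)),
    ms_pd_sum s (fun a ha => (ms_pd_contDiff (hF a ha) j).differentiable (by norm_num))]

theorem ms_pd2_symm {F : (V → ℝ) → ℝ} (hF : ContDiff ℝ 2 F) (i j : V) (x : V → ℝ) :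
    pd2 F i j x = pd2 F j i x := by
  have key : ∀ a b : V, pd2 F a b x = fderiv ℝ (fderiv ℝ F) x (Pi.single a 1) (Pi.single b 1) := by
    intro a b
    unfold pd2
    rw [ms_pd_eq ((ms_pd_contDiff hF b).differentiable (by norm_num)),
      ms_pd_eq (hF.differentiable (by norm_num))]
    have hd : DifferentiableAt ℝ (fderiv ℝ F) x :=
      (hF.fderiv_right (m := 1) (by norm_num)).differentiable (by norm_num) x
    simp only
    rw [fderiv_clm_apply hd (differentiableAt_const _)]
    simp
  rw [key, key]
  exact (hF.contDiffAt.isSymmSndFDerivAt (by simp)).eq _ _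

theorem ms_pd_single_same (h : ℝ → ℝ) (i : V) (x : V → ℝ) :
    pd (fun x : V → ℝ => h (x i)) i x = deriv h (x i) := by
  simp [pd]

theorem ms_pd_single_ne (h : ℝ → ℝ) {i j : V} (hij : i ≠ j) (x : V → ℝ) :
    pd (fun x : V → ℝ => h (x i)) j x = 0 := by
  simp [pd, Function.update_of_ne hij]

theorem ms_pd2_single_same (h : ℝ → ℝ) (i : V) (x : V → ℝ) :
    pd2 (fun x : V → ℝ => h (x i)) i i x = deriv (deriv h) (x i) := by
  unfold pd2
  rw [show pd (fun x : V → ℝ => h (x i)) i = fun x => deriv h (x i) from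
    funext fun x => ms_pd_single_same h i x]
  exact ms_pd_single_same _ i x

theorem ms_pd2_single_ne (h : ℝ → ℝ) (k : V) {i j : V} (hij : k ≠ i ∨ k ≠ j) (x : V → ℝ) :
    pd2 (fun x : V → ℝ => h (x k)) i j x = 0 := by
  unfold pd2
  by_cases hj : k = j
  · subst hj
    rw [show pd (fun x : V → ℝ => h (x k)) k = fun x => deriv h (x k) from
      funext fun x => ms_pd_single_same h k x]
    exact ms_pd_single_ne _ (by tauto) x
  · rw [show pd (fun x : V → ℝ => h (x k)) j = fun x => 0 from
      funext fun x => ms_pd_single_ne h hj x]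
    simp [pd]

/-- `g` depends only on the coordinates in `C`. -/
def MsLocal (C : Finset V) (g : (V → ℝ) → ℝ) : Prop :=
  ∀ x y : V → ℝ, (∀ i ∈ C, x i = y i) → g x = g y

theorem ms_pd_zero {C : Finset V} {g : (V → ℝ) → ℝ} (hg : MsLocal C g) {i : V} (hi : i ∉ C)
    (x : V → ℝ) : pd g i x = 0 := by
  unfold pd
  rw [show (fun y => g (Function.update x i y)) = fun _ => g x from funext fun y =>
    hg _ _ fun k hk => Function.update_of_ne (by rintro rfl; exact hi hk) _ _]
  simp

theorem ms_pd_local {C : Finset V} {g : (V → ℝ) → ℝ} (hg : MsLocal C g) (i : V) :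
    MsLocal C (pd g i) := by
  intro x y hxy
  by_cases hi : i ∈ C
  · unfold pd
    rw [hxy i hi]
    congr 1
    funext s
    refine hg _ _ fun k hk => ?_
    by_cases h : k = i
    · subst h; simp
    · simp [Function.update_of_ne h, hxy k hk]
  · rw [ms_pd_zero hg hi, ms_pd_zero hg hi]

theorem ms_pd2_local {C : Finset V} {g : (V → ℝ) → ℝ} (hg : MsLocal C g) (i j : V) :
    MsLocal C (pd2 g i j) := ms_pd_local (ms_pd_local hg j) i

theorem ms_pd2_zero {C : Finset V} {g : (V → ℝ) → ℝ} (hg : MsLocal C g) {i j : V}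
    (h : ¬ (i ∈ C ∧ j ∈ C)) (x : V → ℝ) : pd2 g i j x = 0 := by
  by_cases hi : i ∈ C
  · have hj : j ∉ C := fun hj => h ⟨hi, hj⟩
    unfold pd2
    rw [show pd g j = fun _ => 0 from funext fun x => ms_pd_zero hg hj x]
    simp [pd]
  · exact ms_pd_zero (ms_pd_local hg j) hi x

/-- One-node contraction estimate. -/
theorem ms_contract {G : (V → ℝ) → ℝ} (hG : ContDiff ℝ 2 G) (i : V) (x y : V → ℝ)
    {M lam B : ℝ} {w : V → ℝ} (hM : 0 < M) (hB : 0 ≤ B)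
    (hMle : ∀ x, M ≤ pd2 G i i x)
    (hdd : ∀ x, ∑ j ∈ univ.erase i, w j * |pd2 G i j x| ≤ lam * w i * pd2 G i i x)
    (hd : ∀ j, j ≠ i → |y j - x j| ≤ B * w j) :
    |y i - x i| ≤ lam * B * w i + |pd G i y - pd G i x| / M := by
  have hP := ms_pd_contDiff hG i
  have hPd : Differentiable ℝ (pd G i) := hP.differentiable (by norm_num)
  have hline : ∀ s : ℝ, HasDerivAt (fun s : ℝ => pd G i (x + s • (y - x)))
      (fderiv ℝ (pd G i) (x + s • (y - x)) (y - x)) s := by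
    intro s
    have h1 : HasDerivAt (fun s : ℝ => x + s • (y - x)) (y - x) s := by
      simpa using ((hasDerivAt_id s).smul_const (y - x)).const_add x
    exact (hPd _).hasFDerivAt.comp_hasDerivAt s h1
  obtain ⟨ξ, -, hξ⟩ := exists_hasDerivAt_eq_slope (fun s : ℝ => pd G i (x + s • (y - x))) _
    (zero_lt_one) (fun s _ => (hline s).continuousAt.continuousWithinAt) (fun s _ => hline s)
  set p := x + ξ • (y - x) with hp
  have hsum : fderiv ℝ (pd G i) p (y - x) = ∑ j, (y j - x j) * pd2 G i j p := by
    conv_lhs => rw [← Finset.univ_sum_single (y - x)]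
    rw [map_sum]
    refine Finset.sum_congr rfl fun j _ => ?_
    rw [ms_pd2_symm hG i j, pd2, ms_pd_eq hPd]
    rw [show (Pi.single j ((y - x) j) : V → ℝ) = (y j - x j) • Pi.single j (1:ℝ) by
      rw [← Pi.single_smul]; simp, map_smul, smul_eq_mul]
  have e1 : ∑ j, (y j - x j) * pd2 G i j p = pd G i y - pd G i x := by
    rw [← hsum, hξ]; simp
  rw [← Finset.add_sum_erase _ _ (Finset.mem_univ i)] at e1
  set A := pd2 G i i p
  have hA : M ≤ A := hMle p
  have hA0 : 0 < A := hM.trans_le hA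
  have e2 : |∑ j ∈ univ.erase i, (y j - x j) * pd2 G i j p| ≤ B * (lam * w i * A) := by
    calc _ ≤ ∑ j ∈ univ.erase i, |(y j - x j) * pd2 G i j p| := Finset.abs_sum_le_sum_abs _ _
      _ ≤ ∑ j ∈ univ.erase i, B * (w j * |pd2 G i j p|) := by
        refine Finset.sum_le_sum fun j hj => ?_
        rw [abs_mul, ← mul_assoc]
        exact mul_le_mul_of_nonneg_right (hd j (Finset.ne_of_mem_erase hj)) (abs_nonneg _)
      _ = B * ∑ j ∈ univ.erase i, w j * |pd2 G i j p| := by rw [Finset.mul_sum]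
      _ ≤ _ := mul_le_mul_of_nonneg_left (hdd p) hB
  have e3 : |y i - x i| * A ≤ |pd G i y - pd G i x| + B * (lam * w i * A) := by
    have : (y i - x i) * A = (pd G i y - pd G i x)
        - ∑ j ∈ univ.erase i, (y j - x j) * pd2 G i j p := by linarith
    rw [← abs_of_pos hA0, ← abs_mul, abs_of_pos hA0, this]
    exact (abs_sub _ _).trans (by linarith)
  have e4 : |pd G i y - pd G i x| ≤ |pd G i y - pd G i x| / M * A := by
    rw [div_mul_eq_mul_div, le_div_iff₀ hM]
    exact mul_le_mul_of_nonneg_left hA (abs_nonneg _)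
  refine le_of_mul_le_mul_right ?_ hA0
  nlinarith

/-- Gluing of factor configurations which agree at `i`. -/
theorem ms_glue (𝒞 : Finset (Finset V))
    (hpair : ∀ i j : V, i ≠ j → (𝒞.filter (fun C => i ∈ C ∧ j ∈ C)).card ≤ 1)
    (i : V) (s : ℝ) (d : V → ℝ) (u : Finset V → V → ℝ) (hu : ∀ C ∈ 𝒞, i ∈ C → u C i = s) :
    ∃ X : V → ℝ, X i = s ∧ (∀ C ∈ 𝒞, i ∈ C → ∀ j ∈ C, X j = u C j) ∧
      ∀ j, j ≠ i → (X j = d j ∨ ∃ C ∈ 𝒞, i ∈ C ∧ j ∈ C ∧ X j = u C j) := by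
  classical
  have hex : ∀ j : V, ∃ v : ℝ, (j = i → v = s) ∧ (∀ C ∈ 𝒞, i ∈ C → j ∈ C → v = u C j) ∧
      (j ≠ i → (v = d j ∨ ∃ C ∈ 𝒞, i ∈ C ∧ j ∈ C ∧ v = u C j)) := by
    intro j
    by_cases hj : j = i
    · subst hj
      exact ⟨s, fun _ => rfl, fun C hC h _ => (hu C hC h).symm, fun h => absurd rfl h⟩
    · by_cases h : ∃ C ∈ 𝒞, i ∈ C ∧ j ∈ C
      · obtain ⟨C, hC, hi, hjC⟩ := h
        refine ⟨u C j, fun h => absurd h hj, fun C' hC' hi' hj' => ?_,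
          fun _ => Or.inr ⟨C, hC, hi, hjC, rfl⟩⟩
        have := Finset.card_le_one.1 (hpair i j (Ne.symm hj)) C (by simp [*]) C' (by simp [*])
        rw [this]
      · refine ⟨d j, fun h => absurd h hj, fun C hC h1 h2 => absurd ⟨C, hC, h1, h2⟩ h,
          fun _ => Or.inl rfl⟩
  choose X h1 h2 h3 using hex
  exact ⟨X, h1 i rfl, fun C hC hi j hj => h2 j C hC hi hj, h3⟩

theorem ms_pd_min {G : (V → ℝ) → ℝ} {i : V} {y : V → ℝ}
    (h : ∀ s, G y ≤ G (Function.update y i s)) : pd G i y = 0 := by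
  unfold pd
  apply IsLocalMin.deriv_eq_zero
  refine Filter.Eventually.of_forall fun s => ?_
  simpa using h s

end MinSumHelpers

/-- **Convergence of min-sum for general separable convex programs, case (i)**
(Theorem 2(i) of Moallemi–Van Roy).  If the objective `F` is `(λ,w)`-scaled diagonally
dominant and each pair of distinct variables participates in at most one common factor,
then the factor-graph min-sum estimates satisfy
`‖x⁽ᵗ⁾ - x*‖_∞ ≤ K (λᵗ/(1-λ)) Σ_{C∈𝒞} Σ_{v∈C} |(J⁰_{C→v})'(x*_v) - ∂f_C/∂x_v(x*_C)|`
and converge to the unique optimum `x*`. -/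
theorem minSum_general_convergence_pairwise_intersection
    {V : Type*} [Fintype V] [DecidableEq V] [Nonempty V]
    -- the hypergraph: a collection of factors, each involving at least two variables
    (𝒞 : Finset (Finset V)) (hcard : ∀ C ∈ 𝒞, 2 ≤ C.card)
    -- the factors of the general separable convex program
    (f : V → ℝ → ℝ) (fC : Finset V → (V → ℝ) → ℝ)
    (hf_sconv : ∀ i, StrictConvexOn ℝ Set.univ (f i))
    (hf_coer : ∀ i, Tendsto (f i) (cocompact ℝ) atTop)
    (hf_smooth : ∀ i, ContDiff ℝ 2 (f i))
    (hfC_conv : ∀ C ∈ 𝒞, ConvexOn ℝ Set.univ (fC C))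
    (hfC_smooth : ∀ C ∈ 𝒞, ContDiff ℝ 2 (fC C))
    -- `f_C` depends only on the coordinates in `C`
    (hfC_local : ∀ C ∈ 𝒞, ∀ x y : V → ℝ, (∀ i ∈ C, x i = y i) → fC C x = fC C y)
    -- the objective function
    (F : (V → ℝ) → ℝ)
    (hF : F = fun x => (∑ i, f i (x i)) + ∑ C ∈ 𝒞, fC C x)
    -- `M = min_i inf_x ∂²F/∂x_i²(x) > 0`
    (M : ℝ) (hM : 0 < M) (hMle : ∀ (i : V) (x : V → ℝ), M ≤ pd2 F i i x)
    -- the unique optimal solution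
    (xstar : V → ℝ) (hxstar : ∀ y, y ≠ xstar → F xstar < F y)
    -- scaled diagonal dominance of `F`
    (lam : ℝ) (w : V → ℝ) (hlam0 : 0 < lam) (hlam1 : lam < 1) (hw : ∀ i, 0 < w i)
    (hdd : ∀ (i : V) (x : V → ℝ),
      ∑ j ∈ univ.erase i, w j * |pd2 F i j x| ≤ lam * w i * pd2 F i i x)
    -- each pair of distinct vertices participates in at most one common factor
    (hpair : ∀ i j : V, i ≠ j → (𝒞.filter (fun C => i ∈ C ∧ j ∈ C)).card ≤ 1)
    -- the factor-graph min-sum messages and their update rules (minima are attained)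
    (Jv : ℕ → V → Finset V → ℝ → ℝ) (JC : ℕ → Finset V → V → ℝ → ℝ)
    (hJv : ∀ (t : ℕ) (i : V) (C : Finset V), C ∈ 𝒞 → i ∈ C → ∀ xi : ℝ,
      Jv (t + 1) i C xi =
        f i xi + ∑ C' ∈ (𝒞.filter (fun C' => i ∈ C')).erase C, JC t C' i xi)
    (hJC : ∀ (t : ℕ) (C : Finset V), C ∈ 𝒞 → ∀ i ∈ C, ∀ xi : ℝ,
      IsLeast (Set.range fun y : V → ℝ =>
          fC C (Function.update y i xi) + ∑ i' ∈ C.erase i, Jv (t + 1) i' C (y i'))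
        (JC (t + 1) C i xi))
    -- the factor initialization assumption
    (hJC0smooth : ∀ C ∈ 𝒞, ∀ i ∈ C, ContDiff ℝ 2 (JC 0 C i))
    (hJC0conv : ∀ C ∈ 𝒞, ∀ i ∈ C, ∃ z : V → ℝ, ∀ xi : ℝ,
      pd2 (fC C) i i (Function.update z i xi) ≤ deriv (deriv (JC 0 C i)) xi)
    -- the estimates: unique minimizers of the local objectives `b⁽ᵗ⁾_i`
    (xEst : ℕ → V → ℝ)
    (hxEst : ∀ (t : ℕ) (i : V) (y : ℝ), y ≠ xEst t i →
      f i (xEst t i) + ∑ C ∈ 𝒞.filter (fun C => i ∈ C), JC t C i (xEst t i) <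
        f i y + ∑ C ∈ 𝒞.filter (fun C => i ∈ C), JC t C i y) :
    (∀ (t : ℕ) (r : V),
      |xEst t r - xstar r| ≤
        ((1 / M) * (univ.sup' univ_nonempty w / univ.inf' univ_nonempty w)) *
          (lam ^ t / (1 - lam)) *
          ∑ C ∈ 𝒞, ∑ v ∈ C, |deriv (JC 0 C v) (xstar v) - pd (fC C) v xstar|) ∧
    ∀ r, Tendsto (fun t => xEst t r) atTop (nhds (xstar r)) := by
  classical
  have hloc : ∀ C ∈ 𝒞, MsLocal C (fC C) := hfC_local
  set N : V → Finset (Finset V) := fun i => 𝒞.filter (fun C => i ∈ C) with hN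
  have memN : ∀ {i C}, C ∈ N i ↔ C ∈ 𝒞 ∧ i ∈ C := by intro i C; simp [hN]
  have hsing : ∀ (h : ℝ → ℝ) (i : V), ContDiff ℝ 2 h → ContDiff ℝ 2 (fun x : V → ℝ => h (x i)) :=
    fun h i hh => hh.comp (contDiff_apply ℝ ℝ i)
  have hd2 : ∀ {g : (V → ℝ) → ℝ}, ContDiff ℝ 2 g → Differentiable ℝ g :=
    fun hg => hg.differentiable (by norm_num)
  have hS1 : ContDiff ℝ 2 (fun x : V → ℝ => ∑ i, f i (x i)) :=
    ContDiff.sum fun i _ => hsing _ i (hf_smooth i)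
  have hS2 : ContDiff ℝ 2 (fun x : V → ℝ => ∑ C ∈ 𝒞, fC C x) :=
    ContDiff.sum fun C hC => hfC_smooth C hC
  have hFsm : ContDiff ℝ 2 F := by rw [hF]; exact hS1.add hS2
  have pdF : ∀ i x, pd F i x = deriv (f i) (x i) + ∑ C ∈ N i, pd (fC C) i x := by
    intro i x
    rw [hF, ms_pd_add (hd2 hS1) (hd2 hS2),
      ms_pd_sum univ (fun a _ => hd2 (hsing _ a (hf_smooth a))),
      ms_pd_sum 𝒞 (fun C hC => hd2 (hfC_smooth C hC))]
    simp only
    rw [Finset.sum_eq_single i (fun b _ hb => ms_pd_single_ne (f b) hb x) (by simp),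
      ms_pd_single_same]
    congr 1
    symm
    refine Finset.sum_subset (Finset.filter_subset _ _) fun C hC hCN => ?_
    exact ms_pd_zero (hloc C hC) (fun h => hCN (memN.2 ⟨hC, h⟩)) x
  have pd2F : ∀ i j x, pd2 F i j x = pd2 (fun x : V → ℝ => f i (x i)) i j x
      + ∑ C ∈ N i, pd2 (fC C) i j x := by
    intro i j x
    rw [hF, ms_pd2_add hS1 hS2, ms_pd2_sum univ (fun a _ => hsing _ a (hf_smooth a)),
      ms_pd2_sum 𝒞 hfC_smooth]
    rw [Finset.sum_eq_single i (fun b _ hb => ms_pd2_single_ne (f b) b (Or.inl hb) x) (by simp)]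
    congr 1
    symm
    refine Finset.sum_subset (Finset.filter_subset _ _) fun C hC hCN => ?_
    exact ms_pd2_zero (hloc C hC) (fun h => hCN (memN.2 ⟨hC, h.1⟩)) x
  have hstar : ∀ i, pd F i xstar = 0 := by
    intro i
    refine ms_pd_min fun s => ?_
    by_cases h : Function.update xstar i s = xstar
    · rw [h]
    · exact (hxstar _ h).le
  set E : ℝ := ∑ C ∈ 𝒞, ∑ v ∈ C, |deriv (JC 0 C v) (xstar v) - pd (fC C) v xstar| with hE
  have hE0 : 0 ≤ E := Finset.sum_nonneg fun _ _ => Finset.sum_nonneg fun _ _ => abs_nonneg _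
  set wmin := univ.inf' univ_nonempty w with hwmin
  set wmax := univ.sup' univ_nonempty w with hwmax
  have hwmin0 : 0 < wmin := (Finset.lt_inf'_iff _).2 fun i _ => hw i
  have hwminle : ∀ i, wmin ≤ w i := fun i => Finset.inf'_le _ (mem_univ i)
  have hwmaxle : ∀ i, w i ≤ wmax := fun i => Finset.le_sup' w (mem_univ i)
  have hl1 : 0 < 1 - lam := by linarith
  obtain ⟨c, hc⟩ : ∃ c, c = E / (M * wmin * (1 - lam)) := ⟨_, rfl⟩
  have hc0 : 0 ≤ c := by rw [hc]; positivity
  -- node estimate at the leaf level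
  have node0 : ∀ (i : V) (𝒟 : Finset (Finset V)), 𝒟 ⊆ N i → ∀ (y : V → ℝ) (B : ℝ), 0 ≤ B →
      (∀ j, j ≠ i → |y j - xstar j| ≤ B * w j) →
      (∀ s, f i (y i) + (∑ C ∈ 𝒟, fC C y + ∑ C ∈ N i \ 𝒟, JC 0 C i (y i)) ≤
        f i s + (∑ C ∈ 𝒟, fC C (Function.update y i s) + ∑ C ∈ N i \ 𝒟, JC 0 C i s)) →
      |y i - xstar i| ≤ (lam * B + (1 - lam) * c) * w i := by
    intro i 𝒟 h𝒟 y B hB hy hmin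
    have h𝒟C : ∀ C ∈ 𝒟, C ∈ 𝒞 := fun C hC => (memN.1 (h𝒟 hC)).1
    have hsd : ∀ C ∈ N i \ 𝒟, C ∈ 𝒞 ∧ i ∈ C := fun C hC => memN.1 (Finset.mem_sdiff.1 hC).1
    have sA := hsing _ i (hf_smooth i)
    have sB : ContDiff ℝ 2 (fun x : V → ℝ => ∑ C ∈ 𝒟, fC C x) :=
      ContDiff.sum fun C hC => hfC_smooth C (h𝒟C C hC)
    have sJ : ∀ C ∈ N i \ 𝒟, ContDiff ℝ 2 (fun x : V → ℝ => JC 0 C i (x i)) :=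
      fun C hC => hsing _ i (hJC0smooth C (hsd C hC).1 i (hsd C hC).2)
    have sC : ContDiff ℝ 2 (fun x : V → ℝ => ∑ C ∈ N i \ 𝒟, JC 0 C i (x i)) := ContDiff.sum sJ
    have sBC : ContDiff ℝ 2 (fun x : V → ℝ => ∑ C ∈ 𝒟, fC C x + ∑ C ∈ N i \ 𝒟, JC 0 C i (x i)) :=
      sB.add sC
    obtain ⟨G, hG⟩ : ∃ G : (V → ℝ) → ℝ, G = fun x => f i (x i) +
      (∑ C ∈ 𝒟, fC C x + ∑ C ∈ N i \ 𝒟, JC 0 C i (x i)) := ⟨_, rfl⟩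
    have sG : ContDiff ℝ 2 G := by rw [hG]; exact sA.add sBC
    have pdG : ∀ x, pd G i x = deriv (f i) (x i) + (∑ C ∈ 𝒟, pd (fC C) i x
        + ∑ C ∈ N i \ 𝒟, deriv (JC 0 C i) (x i)) := by
      intro x
      rw [hG, ms_pd_add (hd2 sA) (hd2 sBC), ms_pd_add (hd2 sB) (hd2 sC),
        ms_pd_sum 𝒟 (fun C hC => hd2 (hfC_smooth C (h𝒟C C hC))),
        ms_pd_sum _ (fun C hC => hd2 (sJ C hC))]
      simp only [ms_pd_single_same]
    have pd2G : ∀ j x, pd2 G i j x = pd2 (fun x : V → ℝ => f i (x i)) i j x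
        + (∑ C ∈ 𝒟, pd2 (fC C) i j x
          + ∑ C ∈ N i \ 𝒟, pd2 (fun x : V → ℝ => JC 0 C i (x i)) i j x) := by
      intro j x
      rw [hG, ms_pd2_add sA sBC, ms_pd2_add sB sC,
        ms_pd2_sum 𝒟 (fun C hC => hfC_smooth C (h𝒟C C hC)), ms_pd2_sum _ sJ]
    -- comparison point
    have hcmp : ∀ x : V → ℝ, ∃ X : V → ℝ, pd2 F i i X ≤ pd2 G i i x ∧
        ∀ j, j ≠ i → |pd2 G i j x| ≤ |pd2 F i j X| := by
      intro x
      have hz : ∀ C, ∃ z : V → ℝ, C ∈ 𝒞 → i ∈ C → ∀ xi : ℝ,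
          pd2 (fC C) i i (Function.update z i xi) ≤ deriv (deriv (JC 0 C i)) xi := by
        intro C
        by_cases h : C ∈ 𝒞 ∧ i ∈ C
        · obtain ⟨z, hz⟩ := hJC0conv C h.1 i h.2
          exact ⟨z, fun _ _ => hz⟩
        · exact ⟨x, fun h1 h2 => absurd ⟨h1, h2⟩ h⟩
      choose z hz using hz
      obtain ⟨X, hXi, hXC, -⟩ := ms_glue 𝒞 hpair i (x i) x
        (fun C => if C ∈ 𝒟 then x else Function.update (z C) i (x i)) (by
          intro C _ _
          by_cases h : C ∈ 𝒟 <;> simp [h])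
      have hX1 : ∀ C ∈ 𝒟, ∀ j ∈ C, X j = x j := by
        intro C hC j hj
        have := memN.1 (h𝒟 hC)
        simpa [hC] using hXC C this.1 this.2 j hj
      have hX2 : ∀ C ∈ N i \ 𝒟, ∀ j ∈ C, X j = Function.update (z C) i (x i) j := by
        intro C hC j hj
        have h2 := (Finset.mem_sdiff.1 hC).2
        have := hsd C hC
        simpa [h2] using hXC C this.1 this.2 j hj
      have hsum𝒟 : ∀ j, ∑ C ∈ 𝒟, pd2 (fC C) i j X = ∑ C ∈ 𝒟, pd2 (fC C) i j x := fun j =>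
        Finset.sum_congr rfl fun C hC =>
          ms_pd2_local (hloc C (h𝒟C C hC)) i j X x (hX1 C hC)
      refine ⟨X, ?_, ?_⟩
      · rw [pd2F, pd2G, ms_pd2_single_same, ms_pd2_single_same, hXi,
          ← Finset.sum_sdiff h𝒟, hsum𝒟]
        have : ∑ C ∈ N i \ 𝒟, pd2 (fC C) i i X ≤
            ∑ C ∈ N i \ 𝒟, pd2 (fun x : V → ℝ => JC 0 C i (x i)) i i x := by
          refine Finset.sum_le_sum fun C hC => ?_
          rw [ms_pd2_single_same, ms_pd2_local (hloc C (hsd C hC).1) i i X _ (hX2 C hC)]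
          exact hz C (hsd C hC).1 (hsd C hC).2 (x i)
        linarith
      · intro j hj
        rw [pd2F, pd2G, ms_pd2_single_ne _ _ (Or.inr hj.symm), ms_pd2_single_ne _ _ (Or.inr hj.symm),
          Finset.sum_eq_zero (s := N i \ 𝒟)
            (fun C _ => ms_pd2_single_ne (JC 0 C i) i (Or.inr hj.symm) x),
          zero_add, zero_add, add_zero]
        by_cases hex : ∃ C ∈ 𝒟, j ∈ C
        · obtain ⟨C, hC, hjC⟩ := hex
          have hCi := memN.1 (h𝒟 hC)
          rw [← Finset.sum_sdiff h𝒟, hsum𝒟, Finset.sum_eq_zero (s := N i \ 𝒟), zero_add]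
          intro C' hC'
          refine ms_pd2_zero (hloc C' (hsd C' hC').1) (fun h => ?_) X
          have heq := Finset.card_le_one.1 (hpair i j hj.symm) C
            (Finset.mem_filter.2 ⟨hCi.1, hCi.2, hjC⟩) C'
            (Finset.mem_filter.2 ⟨(hsd C' hC').1, h.1, h.2⟩)
          exact (Finset.mem_sdiff.1 hC').2 (heq ▸ hC)
        · rw [Finset.sum_eq_zero (s := 𝒟), abs_zero]
          · exact abs_nonneg _
          · intro C hC
            exact ms_pd2_zero (hloc C (h𝒟C C hC)) (fun h => hex ⟨C, hC, h.2⟩) x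
    have key := ms_contract sG i xstar y (w := w) (lam := lam) hM hB
      (fun x => by
        obtain ⟨X, h1, -⟩ := hcmp x
        exact (hMle i X).trans h1)
      (fun x => by
        obtain ⟨X, h1, h2⟩ := hcmp x
        calc _ ≤ ∑ j ∈ univ.erase i, w j * |pd2 F i j X| :=
              Finset.sum_le_sum fun j hj =>
                mul_le_mul_of_nonneg_left (h2 j (Finset.ne_of_mem_erase hj)) (hw j).le
          _ ≤ lam * w i * pd2 F i i X := hdd i X
          _ ≤ _ := mul_le_mul_of_nonneg_left h1 (mul_nonneg hlam0.le (hw i).le))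
      hy
    have g1 : pd G i y = 0 := ms_pd_min fun s => by rw [hG]; simpa using hmin s
    have g2 : pd G i xstar =
        ∑ C ∈ N i \ 𝒟, (deriv (JC 0 C i) (xstar i) - pd (fC C) i xstar) := by
      have h0 := hstar i
      rw [pdF, ← Finset.sum_sdiff h𝒟] at h0
      rw [pdG, Finset.sum_sub_distrib]
      linarith
    have g3 : |pd G i y - pd G i xstar| ≤ E := by
      rw [g1, zero_sub, abs_neg, g2]
      calc _ ≤ ∑ C ∈ N i \ 𝒟, |deriv (JC 0 C i) (xstar i) - pd (fC C) i xstar| :=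
            Finset.abs_sum_le_sum_abs _ _
        _ ≤ ∑ C ∈ N i \ 𝒟, ∑ v ∈ C, |deriv (JC 0 C v) (xstar v) - pd (fC C) v xstar| :=
            Finset.sum_le_sum fun C hC => Finset.single_le_sum
              (f := fun v => |deriv (JC 0 C v) (xstar v) - pd (fC C) v xstar|)
              (fun _ _ => abs_nonneg _) (hsd C hC).2
        _ ≤ E := Finset.sum_le_sum_of_subset_of_nonneg (fun C hC => (hsd C hC).1)
            fun _ _ _ => Finset.sum_nonneg fun _ _ => abs_nonneg _
    have g4 : |pd G i y - pd G i xstar| / M ≤ (1 - lam) * c * w i := by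
      have e : (1 - lam) * c * w i = E * (w i / wmin) / M := by
        rw [hc]; field_simp
      rw [e]
      refine div_le_div_of_nonneg_right (g3.trans ?_) hM.le
      exact le_mul_of_one_le_right hE0 ((one_le_div hwmin0).2 (hwminle i))
    linarith [key]
  -- the induction hypothesis
  obtain ⟨P, hP⟩ : ∃ P : ℕ → Prop, ∀ t, P t ↔ ∀ C ∈ 𝒞, ∀ i ∈ C, ∀ y : V → ℝ,
      fC C y + ∑ j ∈ C.erase i, Jv (t + 1) j C (y j) = JC (t + 1) C i (y i) →
      ∀ B, lam ^ t * c ≤ B → |y i - xstar i| ≤ B * w i → ∀ j ∈ C, |y j - xstar j| ≤ B * w j :=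
    ⟨_, fun _ => Iff.rfl⟩
  have node1 : ∀ t, P t → ∀ (i : V) (𝒟 : Finset (Finset V)), 𝒟 ⊆ N i → ∀ (y : V → ℝ) (B : ℝ),
      lam ^ t * c ≤ B → |y i - xstar i| ≤ B * w i →
      (∀ C ∈ 𝒟, ∀ j ∈ C, |y j - xstar j| ≤ B * w j) →
      (∀ s, f i (y i) + (∑ C ∈ 𝒟, fC C y + ∑ C ∈ N i \ 𝒟, JC (t + 1) C i (y i)) ≤
        f i s + (∑ C ∈ 𝒟, fC C (Function.update y i s) + ∑ C ∈ N i \ 𝒟, JC (t + 1) C i s)) →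
      |y i - xstar i| ≤ lam * B * w i := by
    intro t hPt i 𝒟 h𝒟 y B hB hyi hy𝒟 hmin
    rw [hP] at hPt
    have hB0 : 0 ≤ B := le_trans (mul_nonneg (pow_nonneg hlam0.le _) hc0) hB
    have hv : ∀ C, ∃ v : V → ℝ, C ∈ 𝒞 → i ∈ C → v i = y i ∧
        fC C v + ∑ j ∈ C.erase i, Jv (t + 1) j C (v j) = JC (t + 1) C i (y i) := by
      intro C
      by_cases h : C ∈ 𝒞 ∧ i ∈ C
      · obtain ⟨v0, hv0⟩ := (hJC t C h.1 i h.2 (y i)).1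
        refine ⟨Function.update v0 i (y i), fun _ _ => ⟨by simp, ?_⟩⟩
        rw [← hv0]
        simp only
        congr 1
        refine Finset.sum_congr rfl fun j hj => ?_
        rw [Function.update_of_ne (Finset.ne_of_mem_erase hj)]
      · exact ⟨y, fun h1 h2 => absurd ⟨h1, h2⟩ h⟩
    choose v hv using hv
    obtain ⟨X, hXi, hXC, hXd⟩ := ms_glue 𝒞 hpair i (y i) xstar
      (fun C => if C ∈ 𝒟 then y else v C) (by
        intro C h1 h2
        by_cases h : C ∈ 𝒟
        · simp [h]
        · simp [h, (hv C h1 h2).1])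
    have hXb : ∀ j, j ≠ i → |X j - xstar j| ≤ B * w j := by
      intro j hj
      rcases hXd j hj with h | ⟨C, hC, hi, hjC, h⟩
      · rw [h, sub_self, abs_zero]; exact mul_nonneg hB0 (hw j).le
      · rw [h]
        by_cases h𝒟C : C ∈ 𝒟
        · simpa [h𝒟C] using hy𝒟 C h𝒟C j hjC
        · simp only [h𝒟C, if_false]
          obtain ⟨h1, h2⟩ := hv C hC hi
          exact hPt C hC i hi (v C) (by rw [h2, h1]) B hB (by rw [h1]; exact hyi) j hjC
    have hupd : ∀ {C : Finset V} {a b : V → ℝ} (s : ℝ), (∀ j ∈ C, a j = b j) →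
        ∀ j ∈ C, Function.update a i s j = Function.update b i s j := by
      intro C a b s h j hj
      by_cases hji : j = i
      · subst hji; simp
      · simp [Function.update_of_ne hji, h j hj]
    have hstat : pd F i X = 0 := by
      refine ms_pd_min fun s => ?_
      have a1 : ∑ k, f k (Function.update X i s k) - ∑ k, f k (X k) = f i s - f i (y i) := by
        rw [← Finset.add_sum_erase _ _ (mem_univ i), ← Finset.add_sum_erase univ (fun k => f k (X k)) (mem_univ i),
          Finset.sum_congr rfl (fun j hj => by
            rw [Function.update_of_ne (Finset.ne_of_mem_erase hj)] :
            ∀ j ∈ univ.erase i, f j (Function.update X i s j) = f j (X j))]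
        rw [Function.update_self, hXi]
        ring
      have a2 : ∑ C ∈ 𝒞, fC C (Function.update X i s) - ∑ C ∈ 𝒞, fC C X
          = ∑ C ∈ N i, (fC C (Function.update X i s) - fC C X) := by
        rw [← Finset.sum_sub_distrib]
        symm
        refine Finset.sum_subset (Finset.filter_subset _ _) fun C hC hCN => ?_
        rw [hloc C hC (Function.update X i s) X, sub_self]
        intro j hj
        refine Function.update_of_ne ?_ _ _
        rintro rfl
        exact hCN (memN.2 ⟨hC, hj⟩)
      have a3 : ∑ C ∈ 𝒟, (fC C (Function.update X i s) - fC C X)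
          = ∑ C ∈ 𝒟, fC C (Function.update y i s) - ∑ C ∈ 𝒟, fC C y := by
        rw [← Finset.sum_sub_distrib]
        refine Finset.sum_congr rfl fun C hC => ?_
        have hCi := memN.1 (h𝒟 hC)
        have hXy : ∀ j ∈ C, X j = y j := fun j hj => by
          simpa [hC] using hXC C hCi.1 hCi.2 j hj
        rw [hloc C hCi.1 X y hXy, hloc C hCi.1 _ _ (hupd s hXy)]
      have a4 : ∑ C ∈ N i \ 𝒟, JC (t + 1) C i s - ∑ C ∈ N i \ 𝒟, JC (t + 1) C i (y i)
          ≤ ∑ C ∈ N i \ 𝒟, (fC C (Function.update X i s) - fC C X) := by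
        rw [← Finset.sum_sub_distrib]
        refine Finset.sum_le_sum fun C hC => ?_
        have hCi := memN.1 (Finset.mem_sdiff.1 hC).1
        have hCD := (Finset.mem_sdiff.1 hC).2
        have hXv : ∀ j ∈ C, X j = v C j := fun j hj => by
          simpa [hCD] using hXC C hCi.1 hCi.2 j hj
        rw [hloc C hCi.1 X _ hXv, hloc C hCi.1 _ _ (hupd s hXv), ← (hv C hCi.1 hCi.2).2]
        have := (hJC t C hCi.1 i hCi.2 s).2 ⟨v C, rfl⟩
        simp only at this
        linarith
      have a5 := Finset.sum_sdiff (f := fun C => fC C (Function.update X i s) - fC C X) h𝒟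
      have a6 := hmin s
      rw [hF]
      simp only
      linarith
    have key := ms_contract hFsm i xstar X hM hB0 (hMle i) (hdd i) hXb
    rw [hstat, hstar, sub_self, abs_zero, zero_div, add_zero, hXi] at key
    exact key
  -- coordinatewise minimality inside a factor
  have hcoord : ∀ t, ∀ C ∈ 𝒞, ∀ i ∈ C, ∀ y : V → ℝ,
      fC C y + ∑ j ∈ C.erase i, Jv (t + 1) j C (y j) = JC (t + 1) C i (y i) →
      ∀ k ∈ C, k ≠ i → ∀ s,
      f k (y k) + (∑ C' ∈ {C}, fC C' y + ∑ C' ∈ N k \ {C}, JC t C' k (y k)) ≤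
        f k s + (∑ C' ∈ {C}, fC C' (Function.update y k s) + ∑ C' ∈ N k \ {C}, JC t C' k s) := by
    intro t C hC i hi y hy k hk hki s
    have h1 := (hJC t C hC i hi (y i)).2 ⟨Function.update y k s, rfl⟩
    rw [← hy] at h1
    simp only at h1
    have h2 : Function.update (Function.update y k s) i (y i) = Function.update y k s := by
      rw [Function.update_eq_iff]
      exact ⟨by rw [Function.update_of_ne hki.symm], fun _ _ => rfl⟩
    have hke : k ∈ C.erase i := Finset.mem_erase.2 ⟨hki, hk⟩
    rw [h2, ← Finset.add_sum_erase _ _ hke,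
      ← Finset.add_sum_erase _ (fun j => Jv (t + 1) j C (Function.update y k s j)) hke,
      Finset.sum_congr rfl (fun j hj => by
        rw [Function.update_of_ne (Finset.ne_of_mem_erase hj)] :
        ∀ j ∈ (C.erase i).erase k, Jv (t + 1) j C (Function.update y k s j)
          = Jv (t + 1) j C (y j)), Function.update_self, hJv t k C hC hk, hJv t k C hC hk] at h1
    rw [Finset.sum_singleton, Finset.sum_singleton, Finset.sdiff_singleton_eq_erase]
    linarith
  have hsub : ∀ C ∈ 𝒞, ∀ k ∈ C, ({C} : Finset (Finset V)) ⊆ N k := by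
    intro C hC k hk
    rw [Finset.singleton_subset_iff]
    exact memN.2 ⟨hC, hk⟩
  have hall : ∀ t, P t := by
    intro t
    induction t with
    | zero =>
      rw [hP]
      intro C hC i hi y hy B hB hyi
      by_contra hcon
      obtain ⟨k, hk, hkmax⟩ := Finset.exists_max_image C (fun j => |y j - xstar j| / w j) ⟨i, hi⟩
      obtain ⟨m, hm⟩ : ∃ m, m = |y k - xstar k| / w k := ⟨_, rfl⟩
      have hb : ∀ j ∈ C, |y j - xstar j| ≤ m * w j := fun j hj => by
        rw [hm, ← div_le_iff₀ (hw j)]; exact hkmax j hj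
      have hmB : B < m := by
        by_contra hle
        exact hcon fun j hj => (hb j hj).trans
          (mul_le_mul_of_nonneg_right (not_lt.1 hle) (hw j).le)
      have hki : k ≠ i := by
        rintro rfl
        rw [← div_le_iff₀ (hw k), ← hm] at hyi
        linarith
      have hcB : c ≤ B := by simpa using hB
      have hmin := hcoord 0 C hC i hi y hy k hk hki
      have hyy : ∀ j ∈ C, (fun j => if j ∈ C then y j else xstar j) j = y j := by
        intro j hj; simp [hj]
      have := node0 k {C} (hsub C hC k hk) (fun j => if j ∈ C then y j else xstar j) m
        (by linarith) (by
          intro j _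
          by_cases hj : j ∈ C
          · simpa [hj] using hb j hj
          · simp only [hj, if_false, sub_self, abs_zero]
            exact mul_nonneg (by linarith) (hw j).le) (by
          intro s
          have h := hmin s
          rw [Finset.sum_singleton, Finset.sum_singleton] at h ⊢
          rw [hloc C hC _ y hyy, hloc C hC (Function.update _ k s) (Function.update y k s)]
          · simpa [hk] using h
          · intro j hj
            by_cases hjk : j = k
            · subst hjk; simp
            · simp [Function.update_of_ne hjk, hj])
      simp only [hk, if_true] at this
      rw [← div_le_iff₀ (hw k), ← hm] at this
      nlinarith
    | succ t ih =>
      have ih' := ih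
      rw [hP]
      intro C hC i hi y hy B hB hyi
      by_contra hcon
      obtain ⟨k, hk, hkmax⟩ := Finset.exists_max_image C (fun j => |y j - xstar j| / w j) ⟨i, hi⟩
      obtain ⟨m, hm⟩ : ∃ m, m = |y k - xstar k| / w k := ⟨_, rfl⟩
      have hb : ∀ j ∈ C, |y j - xstar j| ≤ m * w j := fun j hj => by
        rw [hm, ← div_le_iff₀ (hw j)]; exact hkmax j hj
      have hmB : B < m := by
        by_contra hle
        exact hcon fun j hj => (hb j hj).trans
          (mul_le_mul_of_nonneg_right (not_lt.1 hle) (hw j).le)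
      have hki : k ≠ i := by
        rintro rfl
        rw [← div_le_iff₀ (hw k), ← hm] at hyi
        linarith
      have hB0 : 0 ≤ B := le_trans (mul_nonneg (pow_nonneg hlam0.le _) hc0) hB
      have hb' : ∀ j ∈ C, |y j - xstar j| ≤ max m (lam ^ t * c) * w j := fun j hj =>
        (hb j hj).trans (mul_le_mul_of_nonneg_right (le_max_left _ _) (hw j).le)
      have := node1 t ih k {C} (hsub C hC k hk) y (max m (lam ^ t * c)) (le_max_right _ _)
        (hb' k hk) (by
          intro C' hC'
          rw [Finset.mem_singleton] at hC'
          subst hC'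
          exact hb') (hcoord (t + 1) C hC i hi y hy k hk hki)
      rw [← div_le_iff₀ (hw k), ← hm] at this
      rcases max_cases m (lam ^ t * c) with ⟨h, _⟩ | ⟨h, _⟩
      · rw [h] at this; nlinarith
      · rw [h, ← mul_assoc, ← pow_succ'] at this
        linarith
  have hroot : ∀ t r, |xEst t r - xstar r| ≤ lam ^ t * c * w r := by
    intro t r
    have hle : ∀ y, f r (xEst t r) + ∑ C ∈ N r, JC t C r (xEst t r) ≤
        f r y + ∑ C ∈ N r, JC t C r y := by
      intro y
      by_cases h : y = xEst t r
      · rw [h]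
      · exact (hxEst t r y h).le
    cases t with
    | zero =>
      have := node0 r ∅ (Finset.empty_subset _) (Function.update xstar r (xEst 0 r)) 0 le_rfl
        (by intro j hj; simp [Function.update_of_ne hj]) (by
          intro s
          simpa using hle s)
      simp only [Function.update_self, mul_zero, zero_add] at this
      rw [pow_zero, one_mul]
      refine this.trans (mul_le_mul_of_nonneg_right ?_ (hw r).le)
      nlinarith
    | succ t =>
      obtain ⟨m, hm⟩ : ∃ m, m = |xEst (t + 1) r - xstar r| / w r := ⟨_, rfl⟩
      have := node1 t (hall t) r ∅ (Finset.empty_subset _)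
        (Function.update xstar r (xEst (t + 1) r)) (max m (lam ^ t * c)) (le_max_right _ _)
        (by
          rw [Function.update_self, ← div_le_iff₀ (hw r), ← hm]; exact le_max_left _ _)
        (by simp) (by
          intro s
          simpa using hle s)
      rw [Function.update_self, ← div_le_iff₀ (hw r), ← hm] at this
      rw [← div_le_iff₀ (hw r), ← hm]
      have hp : 0 ≤ lam ^ (t + 1) * c := mul_nonneg (pow_nonneg hlam0.le _) hc0
      rcases max_cases m (lam ^ t * c) with ⟨h, _⟩ | ⟨h, _⟩
      · rw [h] at this; nlinarith
      · rw [h, ← mul_assoc, ← pow_succ'] at this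
        linarith
  have hfin : ∀ (t : ℕ) (r : V), |xEst t r - xstar r| ≤
      ((1 / M) * (wmax / wmin)) * (lam ^ t / (1 - lam)) * E := by
    intro t r
    have e : ((1 / M) * (wmax / wmin)) * (lam ^ t / (1 - lam)) * E = lam ^ t * c * wmax := by
      rw [hc]; field_simp
    rw [e]
    exact (hroot t r).trans (mul_le_mul_of_nonneg_left (hwmaxle r)
      (mul_nonneg (pow_nonneg hlam0.le _) hc0))
  refine ⟨hfin, fun r => ?_⟩
  rw [tendsto_iff_dist_tendsto_zero]
  refine squeeze_zero (g := fun t => lam ^ t * c * w r) (fun _ => dist_nonneg)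
    (fun t => by rw [Real.dist_eq]; exact hroot t r) ?_
  have := ((tendsto_pow_atTop_nhds_zero_of_lt_one hlam0.le hlam1).mul_const c).mul_const (w r)
  simpa using this
end

section
/- Let 𝒱 be a finite set, Γ ∈ ℝ^{𝒱×𝒱} a symmetric matrix with strictly positive diagonal entries, w ∈ ℝ^𝒱 with w > 0 componentwise, and 0 < λ < 1, such that for every j ∈ 𝒱, Σ_{i∈𝒱∖{j}} w_i |Γ_{ij}| ≤ λ w_j Γ_{jj}. Let D = diag(Γ) and R = I − D^{−1}Γ. Fix r ∈ 𝒱, t ≥ 0, and h ∈ ℝ^𝒱, and suppose that [R^s D^{−1} h]_r = 0 for all 0 ≤ s < t. Let v be the unique solution of Γ v + h = 0. Then |v_r| / w_r ≤ (λ^t/(1−λ)) · max_{i∈𝒱} |h_i| / (w_i Γ_{ii}). -/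
open Finset

/-- **The key estimate in the proof of Lemma 3 of Moallemi–Van Roy.**
If `Γ` is symmetric with positive diagonal and weighted diagonally dominant, `Γ v + h = 0`,
and the first `t` Neumann-series terms vanish at the coordinate `r`
(`[Rˢ D⁻¹ h]_r = 0` for all `s < t`, where `D = diag(Γ)`, `R = I - D⁻¹Γ`), then
`|v_r| / w_r ≤ (λᵗ/(1-λ)) · max_i |h_i|/(w_i Γ_{ii})`. -/
theorem diagonallyDominant_solution_coordinate_bound
    {𝒱 : Type*} [Fintype 𝒱] [DecidableEq 𝒱] [Nonempty 𝒱]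
    (Γ : Matrix 𝒱 𝒱 ℝ) (hΓsym : Γ.IsSymm) (hΓdiag : ∀ i, 0 < Γ i i)
    (w : 𝒱 → ℝ) (hw : ∀ i, 0 < w i)
    (lam : ℝ) (hlam0 : 0 < lam) (hlam1 : lam < 1)
    (hdd : ∀ j, ∑ i ∈ univ.erase j, w i * |Γ i j| ≤ lam * w j * Γ j j)
    (r : 𝒱) (t : ℕ) (hvec : 𝒱 → ℝ) :
    ∀ D R : Matrix 𝒱 𝒱 ℝ,
      D = Matrix.diagonal (fun i => Γ i i) → R = 1 - D⁻¹ * Γ →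
      (∀ s : ℕ, s < t → (R ^ s).mulVec (D⁻¹.mulVec hvec) r = 0) →
      ∀ v : 𝒱 → ℝ, Γ.mulVec v + hvec = 0 →
        |v r| / w r ≤
          lam ^ t / (1 - lam) *
            univ.sup' univ_nonempty (fun i => |hvec i| / (w i * Γ i i)) := by
  intro D R hD hR hs v hv
  set M := univ.sup' univ_nonempty (fun i => |hvec i| / (w i * Γ i i)) with hM
  have hDinv : D⁻¹ = Matrix.diagonal (fun i => (Γ i i)⁻¹) := by
    apply Matrix.inv_eq_right_inv
    rw [hD, Matrix.diagonal_mul_diagonal, ← Matrix.diagonal_one]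
    congr 1
    funext i
    exact mul_inv_cancel₀ (hΓdiag i).ne'
  have hb : ∀ i, D⁻¹.mulVec hvec i = (Γ i i)⁻¹ * hvec i := by
    intro i
    rw [hDinv, Matrix.mulVec_diagonal]
  have hRij : ∀ j i, R j i = (if j = i then 1 else 0) - (Γ j j)⁻¹ * Γ j i := by
    intro j i
    rw [hR, hDinv, Matrix.sub_apply, Matrix.diagonal_mul, Matrix.one_apply]
  have hRv : R.mulVec v = v + D⁻¹.mulVec hvec := by
    have h1 : Γ.mulVec v = -hvec := eq_neg_of_add_eq_zero_left hv
    rw [hR, Matrix.sub_mulVec, Matrix.one_mulVec, ← Matrix.mulVec_mulVec, h1,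
      Matrix.mulVec_neg, sub_neg_eq_add]
  have hrow : ∀ j, ∑ i, |R j i| * w i ≤ lam * w j := by
    intro j
    have hj := hΓdiag j
    have h0 : R j j = 0 := by
      rw [hRij, if_pos rfl, inv_mul_cancel₀ hj.ne', sub_self]
    rw [← Finset.add_sum_erase _ _ (mem_univ j), h0, abs_zero, zero_mul, zero_add]
    have h2 : ∑ i ∈ univ.erase j, |R j i| * w i
        = (Γ j j)⁻¹ * ∑ i ∈ univ.erase j, w i * |Γ i j| := by
      rw [Finset.mul_sum]
      apply Finset.sum_congr rfl
      intro i hi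
      have hne : j ≠ i := (Finset.ne_of_mem_erase hi).symm
      rw [hRij, if_neg hne, zero_sub, abs_neg, abs_mul, abs_of_pos (inv_pos.mpr hj),
        hΓsym.apply i j]
      ring
    rw [h2, inv_mul_le_iff₀ hj]
    linarith [hdd j]
  have hcon : ∀ (x : 𝒱 → ℝ) (c : ℝ), (∀ i, |x i| ≤ c * w i) →
      ∀ j, |R.mulVec x j| ≤ (lam * c) * w j := by
    intro x c hx j
    have hc : 0 ≤ c := by
      have := (abs_nonneg _).trans (hx j)
      exact nonneg_of_mul_nonneg_left this (hw j)
    calc |R.mulVec x j| = |∑ i, R j i * x i| := rfl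
      _ ≤ ∑ i, |R j i * x i| := Finset.abs_sum_le_sum_abs _ _
      _ ≤ ∑ i, c * (|R j i| * w i) := by
          apply Finset.sum_le_sum
          intro i _
          rw [abs_mul]
          nlinarith [mul_le_mul_of_nonneg_left (hx i) (abs_nonneg (R j i))]
      _ = c * ∑ i, |R j i| * w i := by rw [Finset.mul_sum]
      _ ≤ c * (lam * w j) := mul_le_mul_of_nonneg_left (hrow j) hc
      _ = (lam * c) * w j := by ring
  have hpow : ∀ (s : ℕ) (x : 𝒱 → ℝ) (c : ℝ), (∀ i, |x i| ≤ c * w i) →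
      ∀ j, |(R ^ s).mulVec x j| ≤ (lam ^ s * c) * w j := by
    intro s
    induction s with
    | zero => intro x c hx j; simpa using hx j
    | succ s ih =>
      intro x c hx j
      rw [pow_succ, ← Matrix.mulVec_mulVec]
      have := ih _ _ (hcon x c hx) j
      rw [pow_succ, mul_assoc (lam ^ s)]
      exact this
  have hvr : ∀ s, s ≤ t → (R ^ s).mulVec v r = v r := by
    intro s
    induction s with
    | zero => intro _; simp
    | succ s ih =>
      intro hst
      rw [pow_succ, ← Matrix.mulVec_mulVec, hRv, Matrix.mulVec_add, Pi.add_apply,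
        hs s hst, add_zero]
      exact ih (by omega)
  have hbM : ∀ i, |D⁻¹.mulVec hvec i| ≤ M * w i := by
    intro i
    have h1 : |hvec i| / (w i * Γ i i) ≤ M :=
      Finset.le_sup' (fun i => |hvec i| / (w i * Γ i i)) (mem_univ i)
    rw [div_le_iff₀ (mul_pos (hw i) (hΓdiag i))] at h1
    rw [hb, abs_mul, abs_of_pos (inv_pos.mpr (hΓdiag i)), inv_mul_le_iff₀ (hΓdiag i)]
    linarith
  obtain ⟨k, -, hk⟩ := Finset.exists_max_image univ (fun i => |v i| / w i) univ_nonempty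
  set C := |v k| / w k with hC
  have hvC : ∀ i, |v i| ≤ C * w i := fun i => (div_le_iff₀ (hw i)).mp (hk i (mem_univ i))
  have hCM : C ≤ M / (1 - lam) := by
    have h1 := hcon v C hvC k
    have h2 : v k = R.mulVec v k - D⁻¹.mulVec hvec k := by
      rw [hRv, Pi.add_apply]; ring
    have h3 : |v k| ≤ (lam * C + M) * w k := by
      rw [h2]
      have := abs_sub (R.mulVec v k) (D⁻¹.mulVec hvec k)
      linarith [hbM k]
    have h4 : C ≤ lam * C + M := (div_le_iff₀ (hw k)).mpr h3
    rw [le_div_iff₀ (by linarith)]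
    linarith
  rw [div_le_iff₀ (hw r), ← hvr t le_rfl]
  refine (hpow t v C hvC r).trans ?_
  apply mul_le_mul_of_nonneg_right _ (hw r).le
  calc lam ^ t * C ≤ lam ^ t * (M / (1 - lam)) :=
        mul_le_mul_of_nonneg_left hCM (pow_pos hlam0 t).le
    _ = lam ^ t / (1 - lam) * M := by ring
end

section
/- Consider a pairwise separable convex program and run the min-sum algorithm with the given initial messages. Fix r ∈ V and t ≥ 0, let 𝒯 = (𝒱,ℰ), σ, and F_𝒯 be the associated computation tree rooted at r with depth t and its objective, and assume F_𝒯 attains its minimum at a unique point x̃ ∈ ℝ^𝒱. Then the value of x̃ at the root vertex (the length-zero walk at r) equals the min-sum estimate: x̃_root = x^{(t)}_r. -/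
open Filter Finset

/-- Vertices of the depth-`t` computation tree: a vertex is a walk from the root,
encoded by its length `k ≤ t` and the sequence of vertices visited after the root. -/
abbrev TVert (V : Type*) (t : ℕ) : Type _ := (k : Fin (t + 1)) × (Fin k.1 → V)

/-- The vertex of the original graph at position `m` along the walk `a`
(position `0` is the root `r`). -/
def walkAt {V : Type*} {t : ℕ} (r : V) (a : TVert V t) (m : ℕ) : V :=
  if h : 1 ≤ m ∧ m ≤ a.1.1 then a.2 ⟨m - 1, by omega⟩ else r

/-- The label `σ` of a computation-tree vertex: the final vertex of the walk. -/
def sigTV {V : Type*} {t : ℕ} (r : V) (a : TVert V t) : V := walkAt r a a.1.1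

/-- The parent of a computation-tree vertex (the root is its own parent). -/
def parTV {V : Type*} {t : ℕ} (a : TVert V t) : TVert V t :=
  ⟨⟨a.1.1 - 1, by have := a.1.isLt; omega⟩,
    fun m => a.2 ⟨m.1, lt_of_lt_of_le m.isLt (Nat.sub_le _ _)⟩⟩

/-- The root of the computation tree: the length-zero walk. -/
def rootTV (V : Type*) (t : ℕ) : TVert V t := ⟨⟨0, Nat.succ_pos t⟩, fun m => m.elim0⟩

/-- The set of vertices of the computation tree rooted at `r` of depth `t`:
non-backtracking walks in `G` starting at `r` of length at most `t`. -/
def validSet {V : Type*} [Fintype V] [DecidableEq V] (G : SimpleGraph V) [DecidableRel G.Adj]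
    (r : V) (t : ℕ) : Finset (TVert V t) :=
  univ.filter (fun a =>
    (∀ m, m < a.1.1 → G.Adj (walkAt r a m) (walkAt r a (m + 1))) ∧
    (∀ m, m < a.1.1 - 1 → walkAt r a m ≠ walkAt r a (m + 2)))


section Helpers

variable {V : Type*}

lemma walkAt_parTV {t : ℕ} (r : V) (a : TVert V t) (m : ℕ) (hm : m ≤ a.1.1 - 1) :
    walkAt r (parTV a) m = walkAt r a m := by
  unfold walkAt
  by_cases h : 1 ≤ m
  · have h1 : 1 ≤ m ∧ m ≤ (parTV a).1.1 := ⟨h, hm⟩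
    have h2 : 1 ≤ m ∧ m ≤ a.1.1 := ⟨h, by omega⟩
    rw [dif_pos h1, dif_pos h2]
    rfl
  · rw [dif_neg (by omega), dif_neg (by omega)]

lemma parTV_len {t : ℕ} (a : TVert V t) : (parTV a).1.1 = a.1.1 - 1 := rfl

lemma sigTV_parTV {t : ℕ} (r : V) (a : TVert V t) :
    sigTV r (parTV a) = walkAt r a (a.1.1 - 1) := by
  unfold sigTV
  rw [walkAt_parTV _ _ _ (by rw [parTV_len]), parTV_len]

lemma TVert_ext {t : ℕ} (r : V) (a b : TVert V t) (h : a.1.1 = b.1.1)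
    (hw : ∀ m, 1 ≤ m → m ≤ a.1.1 → walkAt r a m = walkAt r b m) : a = b := by
  obtain ⟨⟨k, hk⟩, p⟩ := a
  obtain ⟨⟨l, hl⟩, q⟩ := b
  simp only at h
  subst h
  congr 1
  funext m
  have := hw (m.1 + 1) (by omega) (by have := m.2; simp only at this ⊢; omega)
  unfold walkAt at this
  have hm := m.2
  simp only at hm
  rw [dif_pos ⟨by omega, by simp only; omega⟩, dif_pos ⟨by omega, by simp only; omega⟩] at this
  exact this

/-- Extend a walk by one vertex. -/
def extTV {t : ℕ} (b : TVert V t) (u : V) (h : b.1.1 < t) : TVert V t :=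
  ⟨⟨b.1.1 + 1, by omega⟩, fun m => if hm : m.1 < b.1.1 then b.2 ⟨m.1, hm⟩ else u⟩

lemma extTV_len {t : ℕ} (b : TVert V t) (u : V) (h : b.1.1 < t) :
    (extTV b u h).1.1 = b.1.1 + 1 := rfl

lemma walkAt_extTV_le {t : ℕ} (r : V) (b : TVert V t) (u : V) (h : b.1.1 < t) (m : ℕ)
    (hm : m ≤ b.1.1) : walkAt r (extTV b u h) m = walkAt r b m := by
  unfold walkAt
  by_cases h1 : 1 ≤ m
  · rw [dif_pos ⟨h1, by rw [extTV_len]; omega⟩, dif_pos ⟨h1, hm⟩]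
    unfold extTV
    simp only
    rw [dif_pos (by omega)]
  · rw [dif_neg (by omega), dif_neg (by omega)]

lemma walkAt_extTV_last {t : ℕ} (r : V) (b : TVert V t) (u : V) (h : b.1.1 < t) :
    walkAt r (extTV b u h) (b.1.1 + 1) = u := by
  unfold walkAt
  rw [dif_pos ⟨by omega, by rw [extTV_len]⟩]
  unfold extTV
  simp

lemma sigTV_extTV {t : ℕ} (r : V) (b : TVert V t) (u : V) (h : b.1.1 < t) :
    sigTV r (extTV b u h) = u := walkAt_extTV_last r b u h

lemma parTV_extTV {t : ℕ} (r : V) (b : TVert V t) (u : V) (h : b.1.1 < t) :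
    parTV (extTV b u h) = b := by
  apply TVert_ext r
  · rw [parTV_len, extTV_len]; omega
  · intro m _ h2
    rw [parTV_len, extTV_len] at h2
    rw [walkAt_parTV _ _ _ (by rw [extTV_len]; omega), walkAt_extTV_le _ _ _ _ _ (by omega)]

variable [Fintype V] [DecidableEq V] (G : SimpleGraph V) [DecidableRel G.Adj]

lemma mem_validSet (r : V) (t : ℕ) (a : TVert V t) : a ∈ validSet G r t ↔
    (∀ m, m < a.1.1 → G.Adj (walkAt r a m) (walkAt r a (m + 1))) ∧
    (∀ m, m < a.1.1 - 1 → walkAt r a m ≠ walkAt r a (m + 2)) := by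
  simp [validSet]

lemma parTV_mem (r : V) (t : ℕ) (a : TVert V t) (ha : a ∈ validSet G r t) :
    parTV a ∈ validSet G r t := by
  rw [mem_validSet] at ha ⊢
  rw [parTV_len]
  refine ⟨fun m hm => ?_, fun m hm => ?_⟩
  · rw [walkAt_parTV _ _ _ (by omega), walkAt_parTV _ _ _ (by omega)]
    exact ha.1 m (by omega)
  · rw [walkAt_parTV _ _ _ (by omega), walkAt_parTV _ _ _ (by omega)]
    exact ha.2 m (by omega)

lemma adj_of_mem (r : V) (t : ℕ) (a : TVert V t) (ha : a ∈ validSet G r t) (h : 1 ≤ a.1.1) :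
    G.Adj (sigTV r (parTV a)) (sigTV r a) := by
  rw [mem_validSet] at ha
  rw [sigTV_parTV]
  have := ha.1 (a.1.1 - 1) (by omega)
  rwa [Nat.sub_add_cancel h] at this

lemma sig_mem_erase (r : V) (t : ℕ) (a : TVert V t) (ha : a ∈ validSet G r t) (h : 1 ≤ a.1.1) :
    sigTV r a ∈ (G.neighborFinset (sigTV r (parTV a))).erase (sigTV r (parTV (parTV a))) := by
  have hadj := adj_of_mem G r t a ha h
  rw [mem_erase, SimpleGraph.mem_neighborFinset]
  refine ⟨?_, hadj⟩
  by_cases h2 : 2 ≤ a.1.1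
  · rw [mem_validSet] at ha
    have := ha.2 (a.1.1 - 2) (by omega)
    rw [Nat.sub_add_cancel h2] at this
    rw [sigTV_parTV r (parTV a), parTV_len, walkAt_parTV _ _ _ (by omega), Nat.sub_sub]
    exact this.symm
  · have : parTV (parTV a) = parTV a := by
      apply TVert_ext r
      · simp only [parTV_len]; omega
      · intro m h1 h3
        simp only [parTV_len] at h3
        omega
    rw [this]
    exact hadj.ne'

lemma extTV_mem (r : V) (t : ℕ) (b : TVert V t) (hb : b ∈ validSet G r t) (h : b.1.1 < t) (u : V)
    (hu : u ∈ (G.neighborFinset (sigTV r b)).erase (sigTV r (parTV b))) :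
    extTV b u h ∈ validSet G r t := by
  rw [mem_erase, SimpleGraph.mem_neighborFinset, sigTV_parTV] at hu
  rw [mem_validSet] at hb ⊢
  rw [extTV_len]
  refine ⟨fun m hm => ?_, fun m hm => ?_⟩
  · rcases Nat.lt_succ_iff_lt_or_eq.mp hm with hm | hm
    · rw [walkAt_extTV_le _ _ _ _ _ (by omega), walkAt_extTV_le _ _ _ _ _ (by omega)]
      exact hb.1 m hm
    · rw [walkAt_extTV_le _ _ _ _ _ (by omega), hm, walkAt_extTV_last]
      exact hu.2
  · rw [walkAt_extTV_le _ _ _ _ _ (by omega)]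
    by_cases hm2 : m < b.1.1 - 1
    · rw [walkAt_extTV_le _ _ _ _ _ (by omega)]
      exact hb.2 m hm2
    · have : m + 2 = b.1.1 + 1 := by omega
      rw [this, walkAt_extTV_last]
      have : m = b.1.1 - 1 := by omega
      rw [this]
      exact hu.1.symm

/-- Reindexing the sum over the children layer. -/
lemma sum_children (r : V) (t s : ℕ) (hs : s < t) (H : TVert V t → V → ℝ) :
    ∑ a ∈ (validSet G r t).filter (fun a => a.1.1 = s + 1), H (parTV a) (sigTV r a) =
    ∑ b ∈ (validSet G r t).filter (fun a => a.1.1 = s),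
      ∑ u ∈ (G.neighborFinset (sigTV r b)).erase (sigTV r (parTV b)), H b u := by
  rw [Finset.sum_sigma']
  refine Finset.sum_bij (fun a _ => ⟨parTV a, sigTV r a⟩) ?_ ?_ ?_ ?_
  · intro a ha
    rw [mem_filter] at ha
    rw [mem_sigma, mem_filter]
    exact ⟨⟨parTV_mem G r t a ha.1, by rw [parTV_len]; omega⟩,
      sig_mem_erase G r t a ha.1 (by omega)⟩
  · intro a ha b hb hab
    rw [mem_filter] at ha hb
    obtain ⟨h1, h2⟩ := Sigma.mk.inj_iff.mp hab
    have h2 := eq_of_heq h2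
    apply TVert_ext r _ _ (by omega)
    intro m hm1 hm2
    by_cases hm : m ≤ a.1.1 - 1
    · rw [← walkAt_parTV r a m hm, h1, walkAt_parTV r b m (by omega)]
    · have e1 : m = a.1.1 := by omega
      have e2 : a.1.1 = b.1.1 := by omega
      unfold sigTV at h2
      rw [e1, h2, ← e2]
  · rintro ⟨b, u⟩ hb
    rw [mem_sigma, mem_filter] at hb
    have hlt : b.1.1 < t := by have := hb.1.2; simp only at this; omega
    refine ⟨extTV b u hlt, ?_, ?_⟩
    · rw [mem_filter]
      refine ⟨extTV_mem G r t b hb.1.1 hlt u hb.2, ?_⟩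
      rw [extTV_len]
      have := hb.1.2
      simp only at this
      omega
    · simp only [parTV_extTV r, sigTV_extTV]
  · intro a _
    rfl

/-- The computation tree objective truncated at depth `s`, with messages `J k` at the leaves. -/
def Phi (f : V → ℝ → ℝ) (g : V → V → ℝ → ℝ → ℝ) (J : ℕ → V → V → ℝ → ℝ) (r : V) (t s k : ℕ)
    (x : TVert V t → ℝ) : ℝ :=
  (∑ a ∈ (validSet G r t).filter (fun a => a.1.1 ≤ s), f (sigTV r a) (x a)) +
  (∑ a ∈ (validSet G r t).filter (fun a => 1 ≤ a.1.1 ∧ a.1.1 ≤ s),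
    g (sigTV r (parTV a)) (sigTV r a) (x (parTV a)) (x a)) +
  (∑ a ∈ (validSet G r t).filter (fun a => a.1.1 = s),
    ∑ u ∈ (G.neighborFinset (sigTV r a)).erase (sigTV r (parTV a)),
      J k u (sigTV r a) (x a))

variable (f : V → ℝ → ℝ) (g : V → V → ℝ → ℝ → ℝ) (J : ℕ → V → V → ℝ → ℝ)

lemma Phi_succ (r : V) (t s k : ℕ) (x : TVert V t → ℝ) :
    Phi G f g J r t (s + 1) k x =
      ((∑ a ∈ (validSet G r t).filter (fun a => a.1.1 ≤ s), f (sigTV r a) (x a)) +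
      (∑ a ∈ (validSet G r t).filter (fun a => 1 ≤ a.1.1 ∧ a.1.1 ≤ s),
        g (sigTV r (parTV a)) (sigTV r a) (x (parTV a)) (x a))) +
      ∑ a ∈ (validSet G r t).filter (fun a => a.1.1 = s + 1),
        (f (sigTV r a) (x a) + g (sigTV r (parTV a)) (sigTV r a) (x (parTV a)) (x a) +
          ∑ u ∈ (G.neighborFinset (sigTV r a)).erase (sigTV r (parTV a)),
            J k u (sigTV r a) (x a)) := by
  have e1 : (validSet G r t).filter (fun a => a.1.1 ≤ s + 1) =
      (validSet G r t).filter (fun a => a.1.1 ≤ s) ∪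
      (validSet G r t).filter (fun a => a.1.1 = s + 1) := by
    rw [← filter_or]
    refine filter_congr fun a _ => ?_
    omega
  have e2 : (validSet G r t).filter (fun a => 1 ≤ a.1.1 ∧ a.1.1 ≤ s + 1) =
      (validSet G r t).filter (fun a => 1 ≤ a.1.1 ∧ a.1.1 ≤ s) ∪
      (validSet G r t).filter (fun a => a.1.1 = s + 1) := by
    rw [← filter_or]
    refine filter_congr fun a _ => ?_
    omega
  unfold Phi
  rw [e1, e2, sum_union, sum_union, sum_add_distrib, sum_add_distrib]
  · ring
  · rw [disjoint_filter]; intro a _ _; omega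
  · rw [disjoint_filter]; intro a _ _; omega

lemma Phi_eq (r : V) (t s k : ℕ) (hs : s < t) (x : TVert V t → ℝ) :
    Phi G f g J r t s k x =
      ((∑ a ∈ (validSet G r t).filter (fun a => a.1.1 ≤ s), f (sigTV r a) (x a)) +
      (∑ a ∈ (validSet G r t).filter (fun a => 1 ≤ a.1.1 ∧ a.1.1 ≤ s),
        g (sigTV r (parTV a)) (sigTV r a) (x (parTV a)) (x a))) +
      ∑ a ∈ (validSet G r t).filter (fun a => a.1.1 = s + 1),
        J k (sigTV r a) (sigTV r (parTV a)) (x (parTV a)) := by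
  unfold Phi
  rw [sum_children G r t s hs (fun b u => J k u (sigTV r b) (x b))]

lemma Phi_le_succ
    (hg_symm : ∀ i j, G.Adj i j → ∀ a b : ℝ, g i j a b = g j i b a)
    (hJrec : ∀ (s : ℕ) (i j : V), G.Adj i j → ∀ xj : ℝ,
      IsLeast (Set.range fun y : ℝ =>
          f i y + g i j y xj + ∑ u ∈ (G.neighborFinset i).erase j, J s u i y)
        (J (s + 1) i j xj))
    (r : V) (t s k : ℕ) (hs : s < t) (x : TVert V t → ℝ) :
    Phi G f g J r t s (k + 1) x ≤ Phi G f g J r t (s + 1) k x := by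
  rw [Phi_succ, Phi_eq G f g J r t s (k + 1) hs]
  gcongr with a ha
  rw [mem_filter] at ha
  have hadj := adj_of_mem G r t a ha.1 (by omega)
  rw [hg_symm _ _ hadj]
  exact (hJrec k _ _ hadj.symm (x (parTV a))).2 ⟨x a, rfl⟩

lemma Phi_exists_succ
    (hg_symm : ∀ i j, G.Adj i j → ∀ a b : ℝ, g i j a b = g j i b a)
    (hJrec : ∀ (s : ℕ) (i j : V), G.Adj i j → ∀ xj : ℝ,
      IsLeast (Set.range fun y : ℝ =>
          f i y + g i j y xj + ∑ u ∈ (G.neighborFinset i).erase j, J s u i y)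
        (J (s + 1) i j xj))
    (r : V) (t s k : ℕ) (hs : s < t) (x : TVert V t → ℝ) :
    ∃ y : TVert V t → ℝ, (∀ a, a ∉ validSet G r t → y a = x a) ∧
      (∀ a, a.1.1 ≤ s → y a = x a) ∧
      Phi G f g J r t (s + 1) k y = Phi G f g J r t s (k + 1) x := by
  have key : ∀ a : TVert V t, ∃ z : ℝ, a ∈ validSet G r t → 1 ≤ a.1.1 →
      f (sigTV r a) z + g (sigTV r (parTV a)) (sigTV r a) (x (parTV a)) z +
          ∑ u ∈ (G.neighborFinset (sigTV r a)).erase (sigTV r (parTV a)),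
            J k u (sigTV r a) z = J (k + 1) (sigTV r a) (sigTV r (parTV a)) (x (parTV a)) := by
    intro a
    by_cases h : a ∈ validSet G r t ∧ 1 ≤ a.1.1
    · have hadj := adj_of_mem G r t a h.1 h.2
      obtain ⟨z, hz⟩ := (hJrec k _ _ hadj.symm (x (parTV a))).1
      refine ⟨z, fun _ _ => ?_⟩
      rw [hg_symm _ _ hadj]
      exact hz
    · exact ⟨0, fun h1 h2 => absurd ⟨h1, h2⟩ h⟩
  choose z hz using key
  refine ⟨fun a => if a ∈ validSet G r t ∧ a.1.1 = s + 1 then z a else x a, ?_, ?_, ?_⟩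
  · intro a ha
    simp [ha]
  · intro a ha
    have : ¬ (a.1.1 = s + 1) := by omega
    simp [this]
  · rw [Phi_succ, Phi_eq G f g J r t s (k + 1) hs]
    congr 1
    · congr 1
      · refine sum_congr rfl fun a ha => ?_
        rw [mem_filter] at ha
        rw [if_neg (by omega)]
      · refine sum_congr rfl fun a ha => ?_
        rw [mem_filter] at ha
        have h1 : ¬ ((parTV a).1.1 = s + 1) := by rw [parTV_len]; omega
        have h2 : ¬ (a.1.1 = s + 1) := by omega
        rw [if_neg (fun h => h1 h.2), if_neg (fun h => h2 h.2)]
    · refine sum_congr rfl fun a ha => ?_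
      rw [mem_filter] at ha
      have h1 : ¬ ((parTV a).1.1 = s + 1) := by rw [parTV_len]; omega
      simp only [if_pos ha]
      rw [if_neg (fun h => h1 h.2)]
      exact hz a ha.1 (by omega)

lemma Phi_zero (r : V) (t k : ℕ) (x : TVert V t → ℝ) :
    Phi G f g J r t 0 k x = f r (x (rootTV V t)) +
      ∑ u ∈ G.neighborFinset r, J k u r (x (rootTV V t)) := by
  have hlen : (rootTV V t).1.1 = 0 := rfl
  have hroot : ∀ a : TVert V t, a.1.1 = 0 → a = rootTV V t := by
    intro a ha
    apply TVert_ext r _ _ (by rw [ha, hlen])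
    intro m _ _
    omega
  have hv : rootTV V t ∈ validSet G r t := by
    rw [mem_validSet, hlen]
    exact ⟨fun m hm => by omega, fun m hm => by omega⟩
  have hsig : sigTV r (rootTV V t) = r := by
    unfold sigTV walkAt
    rw [dif_neg (by omega)]
  have hpar : parTV (rootTV V t) = rootTV V t := hroot _ (by rw [parTV_len, hlen])
  have e1 : (validSet G r t).filter (fun a => a.1.1 = 0) = {rootTV V t} := by
    ext a
    rw [mem_filter, mem_singleton]
    constructor
    · rintro ⟨_, h⟩
      exact hroot a h
    · rintro rfl
      exact ⟨hv, hlen⟩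
  have e2 : (validSet G r t).filter (fun a => a.1.1 ≤ 0) = {rootTV V t} := by
    rw [← e1]
    refine filter_congr fun a _ => ?_
    omega
  have e3 : (validSet G r t).filter (fun a => 1 ≤ a.1.1 ∧ a.1.1 ≤ 0) = ∅ := by
    rw [filter_eq_empty_iff]
    intro a _
    omega
  unfold Phi
  rw [e1, e2, e3]
  simp only [sum_singleton, sum_empty, hsig, hpar, add_zero]
  have hN : G.neighborFinset (sigTV r (rootTV V t)) = G.neighborFinset r := by
    ext u
    simp only [SimpleGraph.mem_neighborFinset, hsig]
  rw [hN, erase_eq_of_notMem (by simp)]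

lemma Phi_chain
    (hg_symm : ∀ i j, G.Adj i j → ∀ a b : ℝ, g i j a b = g j i b a)
    (hJrec : ∀ (s : ℕ) (i j : V), G.Adj i j → ∀ xj : ℝ,
      IsLeast (Set.range fun y : ℝ =>
          f i y + g i j y xj + ∑ u ∈ (G.neighborFinset i).erase j, J s u i y)
        (J (s + 1) i j xj))
    (r : V) (t s : ℕ) : ∀ k, s + k = t → ∀ x : TVert V t → ℝ,
    Phi G f g J r t 0 t x ≤ Phi G f g J r t s k x ∧
    ∃ y : TVert V t → ℝ, (∀ a, a ∉ validSet G r t → y a = x a) ∧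
      y (rootTV V t) = x (rootTV V t) ∧
      Phi G f g J r t s k y = Phi G f g J r t 0 t x := by
  induction s with
  | zero =>
    intro k hk x
    have : k = t := by omega
    subst this
    exact ⟨le_rfl, x, fun _ _ => rfl, rfl, rfl⟩
  | succ s ih =>
    intro k hk x
    obtain ⟨h1, y, hy1, hy2, hy3⟩ := ih (k + 1) (by omega) x
    refine ⟨h1.trans (Phi_le_succ G f g J hg_symm hJrec r t s k (by omega) x), ?_⟩
    obtain ⟨w, hw1, hw2, hw3⟩ := Phi_exists_succ G f g J hg_symm hJrec r t s k (by omega) y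
    exact ⟨w, fun a ha => (hw1 a ha).trans (hy1 a ha),
      (hw2 _ (Nat.zero_le s)).trans hy2, hw3.trans hy3⟩

end Helpers

/-- **The root of the computation tree computes the min-sum estimate** (Section 2.3 of
Moallemi–Van Roy).  If `x̃` is the unique minimizer of the computation-tree objective
`F_𝒯` (as a function of the coordinates indexed by the tree vertices), then its value at
the root equals the min-sum estimate: `x̃_root = x⁽ᵗ⁾_r`. -/
theorem computationTree_root_eq_minSum_estimate
    {V : Type*} [Fintype V] [DecidableEq V] [Nonempty V]
    (G : SimpleGraph V) [DecidableRel G.Adj]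
    -- the factors of the pairwise separable convex program
    (f : V → ℝ → ℝ) (g : V → V → ℝ → ℝ → ℝ)
    (hf_sconv : ∀ i, StrictConvexOn ℝ Set.univ (f i))
    (hf_coer : ∀ i, Tendsto (f i) (cocompact ℝ) atTop)
    (hf_smooth : ∀ i, ContDiff ℝ 2 (f i))
    (hg_conv : ∀ i j, G.Adj i j → ConvexOn ℝ Set.univ (fun q : ℝ × ℝ => g i j q.1 q.2))
    (hg_smooth : ∀ i j, G.Adj i j → ContDiff ℝ 2 (fun q : ℝ × ℝ => g i j q.1 q.2))
    (hg_symm : ∀ i j, G.Adj i j → ∀ a b : ℝ, g i j a b = g j i b a)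
    -- the objective function
    (F : (V → ℝ) → ℝ)
    (hF : F = fun x => (∑ i, f i (x i)) +
      (1 / 2) * ∑ i, ∑ j ∈ G.neighborFinset i, g i j (x i) (x j))
    -- `M = min_i inf_x ∂²F/∂x_i²(x) > 0`
    (M : ℝ) (hM : 0 < M) (hMle : ∀ (i : V) (x : V → ℝ), M ≤ pd2 F i i x)
    -- the min-sum messages and their update rule (minima are attained)
    (J : ℕ → V → V → ℝ → ℝ)
    (hJrec : ∀ (s : ℕ) (i j : V), G.Adj i j → ∀ xj : ℝ,
      IsLeast (Set.range fun y : ℝ =>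
          f i y + g i j y xj + ∑ u ∈ (G.neighborFinset i).erase j, J s u i y)
        (J (s + 1) i j xj))
    -- the estimates: unique minimizers of the local objectives `b⁽ˢ⁾_i`
    (xEst : ℕ → V → ℝ)
    (hxEst : ∀ (s : ℕ) (i : V) (y : ℝ), y ≠ xEst s i →
      f i (xEst s i) + ∑ u ∈ G.neighborFinset i, J s u i (xEst s i) <
        f i y + ∑ u ∈ G.neighborFinset i, J s u i y)
    -- the root and depth of the computation tree, and its objective function
    (r : V) (t : ℕ)
    (FT : (TVert V t → ℝ) → ℝ)
    (hFT : FT = fun x =>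
      (∑ a ∈ validSet G r t, f (sigTV r a) (x a)) +
      (∑ a ∈ (validSet G r t).filter (fun a => 1 ≤ a.1.1),
        g (sigTV r (parTV a)) (sigTV r a) (x (parTV a)) (x a)) +
      (∑ a ∈ (validSet G r t).filter (fun a => a.1.1 = t),
        ∑ u ∈ (G.neighborFinset (sigTV r a)).erase (sigTV r (parTV a)),
          J 0 u (sigTV r a) (x a)))
    -- `x̃` is the unique minimizer of `F_𝒯` over the tree coordinates
    (xt : TVert V t → ℝ)
    (hxt : ∀ y : TVert V t → ℝ, (∀ a, a ∉ validSet G r t → y a = xt a) → y ≠ xt →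
      FT xt < FT y) :
    xt (rootTV V t) = xEst t r := by
  have hP : ∀ x, FT x = Phi G f g J r t t 0 x := by
    intro x
    have e1 : (validSet G r t).filter (fun a => a.1.1 ≤ t) = validSet G r t := by
      rw [filter_eq_self]
      intro a _
      have := a.1.2
      omega
    have e2 : (validSet G r t).filter (fun a => 1 ≤ a.1.1 ∧ a.1.1 ≤ t) =
        (validSet G r t).filter (fun a => 1 ≤ a.1.1) := by
      refine filter_congr fun a _ => ?_
      have := a.1.2
      omega
    rw [hFT]
    unfold Phi
    rw [e1, e2]
  have hv : rootTV V t ∈ validSet G r t := by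
    rw [mem_validSet]
    have hlen : (rootTV V t).1.1 = 0 := rfl
    rw [hlen]
    exact ⟨fun m hm => by omega, fun m hm => by omega⟩
  by_contra hne
  have hlow := (Phi_chain G f g J hg_symm hJrec r t t 0 (by omega) xt).1
  obtain ⟨-, y, hy1, hy2, hy3⟩ := Phi_chain G f g J hg_symm hJrec r t t 0 (by omega)
    (Function.update xt (rootTV V t) (xEst t r))
  rw [Function.update_self] at hy2
  have hlt := hxt y (fun a ha => by
      rw [hy1 a ha, Function.update_of_ne]
      rintro rfl
      exact ha hv) (fun h => hne (by rw [← hy2, h]))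
  have hb := hxEst t r _ hne
  rw [hP, hP, hy3, Phi_zero, Function.update_self] at hlt
  rw [Phi_zero] at hlow
  linarith
end

section
/- Let (V,E) be a finite simple undirected graph and let A ∈ ℝ^{V×V} be a symmetric positive definite matrix that admits a pairwise convex decomposition: A = Λ + Σ_{{i,j}∈E} B^{ij}, where Λ is a diagonal matrix with strictly positive diagonal entries and each B^{ij} is a positive semidefinite symmetric matrix whose entries vanish outside of {i,j} × {i,j}. Then the quadratic form F(x) = (1/2) xᵀAx is scaled diagonally dominant: there exist λ ∈ (0,1) and w ∈ ℝ^V with w > 0 componentwise such that for every i ∈ V, Σ_{j∈V∖{i}} w_j |A_{ij}| ≤ λ w_i A_{ii}. -/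
open Finset

/-- the comparison matrix -/
def sddCmp {V : Type*} [DecidableEq V] (B : Matrix V V ℝ) : Matrix V V ℝ :=
  fun a b => if a = b then B a a else -|B a b|

lemma sdd_edge {V : Type*} [Fintype V] [DecidableEq V] (B : Matrix V V ℝ)
    (hB : B.PosSemidef) (i j : V) (hij : i ≠ j)
    (hs : ∀ a b : V, ¬((a = i ∨ a = j) ∧ (b = i ∨ b = j)) → B a b = 0) (y : V → ℝ) :
    0 ≤ ∑ a, ∑ b, y a * sddCmp B a b * y b := by
  obtain ⟨s, hs1, hs2⟩ : ∃ s : ℝ, s * s = 1 ∧ s * B i j = -|B i j| := by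
    rcases le_total 0 (B i j) with h | h
    · exact ⟨-1, by norm_num, by rw [abs_of_nonneg h]; ring⟩
    · exact ⟨1, by norm_num, by rw [abs_of_nonpos h]; ring⟩
  have hsym : B j i = B i j := by
    have := hB.1.apply i j
    simpa using this
  have key := hB.dotProduct_mulVec_nonneg (fun a => if a = j then s * y a else y a)
  simp only [dotProduct, Matrix.mulVec, Finset.mul_sum] at key
  refine key.trans_eq ?_
  refine Finset.sum_congr rfl fun a _ => Finset.sum_congr rfl fun b _ => ?_
  simp only [Pi.star_apply, star_trivial, sddCmp]
  by_cases hab : a = b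
  · subst hab
    by_cases haj : a = j
    · simp only [haj, if_true]
      linear_combination (y j * B j j * y j) * hs1
    · simp [haj]; ring
  · by_cases h : (a = i ∨ a = j) ∧ (b = i ∨ b = j)
    · rcases h with ⟨rfl | rfl, rfl | rfl⟩
      · exact absurd rfl hab
      · simp only [hab, if_false, if_true]
        linear_combination (y a * y b) * hs2
      · simp only [hab, hij, if_false, if_true]
        rw [hsym]
        linear_combination (y a * y b) * hs2
      · exact absurd rfl hab
    · rw [hs a b h]; simp [hab]

lemma sdd_solve {V : Type*} [Fintype V] [DecidableEq V] (A : Matrix V V ℝ)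
    (hA : ∀ i, 0 < A i i)
    (hpos : ∀ x : V → ℝ, x ≠ 0 → 0 < ∑ a, ∑ b, x a * sddCmp A a b * x b) :
    ∃ (lam : ℝ) (w : V → ℝ), 0 < lam ∧ lam < 1 ∧ (∀ i, 0 < w i) ∧
      ∀ i, ∑ j ∈ univ.erase i, w j * |A i j| ≤ lam * w i * A i i := by
  have hinj : Function.Injective (Matrix.mulVecLin (sddCmp A)) := by
    rw [← LinearMap.ker_eq_bot, LinearMap.ker_eq_bot']
    intro x hx
    by_contra hne
    have h := hpos x hne
    have h2 : ∑ a, ∑ b, x a * sddCmp A a b * x b = ∑ a, x a * (sddCmp A).mulVec x a := by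
      simp only [Matrix.mulVec, dotProduct, Finset.mul_sum, mul_assoc]
    rw [Matrix.mulVecLin_apply] at hx
    rw [h2, hx] at h
    simp at h
  obtain ⟨w, hw⟩ := (LinearMap.injective_iff_surjective.mp hinj) (fun _ => 1)
  rw [Matrix.mulVecLin_apply] at hw
  have hw' : ∀ i, ∑ b, sddCmp A i b * w b = 1 := fun i => congrFun hw i
  have hnn : ∀ i, 0 ≤ w i := by
    by_contra! hcon
    obtain ⟨k, hk⟩ := hcon
    set n : V → ℝ := fun i => max (-w i) 0 with hn
    have hn0 : ∀ i, 0 ≤ n i := fun i => le_max_right _ _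
    have hne : n ≠ 0 := by
      intro h
      have := congrFun h k
      have h2 : -w k ≤ n k := le_max_left _ _
      simp only [this, Pi.zero_apply] at h2
      linarith
    have h := hpos n hne
    have h1 : ∑ a, n a = ∑ a, ∑ b, n a * sddCmp A a b * w b := by
      refine Finset.sum_congr rfl fun a _ => ?_
      simp only [mul_assoc]
      rw [← Finset.mul_sum, hw', mul_one]
    have h2 : ∑ a, ∑ b, n a * sddCmp A a b * w b ≤ -∑ a, ∑ b, n a * sddCmp A a b * n b := by
      rw [← Finset.sum_neg_distrib]
      refine Finset.sum_le_sum fun a _ => ?_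
      rw [← Finset.sum_neg_distrib]
      refine Finset.sum_le_sum fun b _ => ?_
      have hb : 0 ≤ w b + n b := by
        have : -w b ≤ n b := le_max_left _ _
        linarith
      by_cases hab : a = b
      · subst hab
        have : n a * (w a + n a) = 0 := by
          rcases le_total 0 (w a) with h | h
          · have : n a = 0 := max_eq_right (by linarith)
            simp [this]
          · have : n a = -w a := max_eq_left (by linarith)
            simp [this]
        apply le_of_eq
        linear_combination sddCmp A a a * this
      · have hc : sddCmp A a b ≤ 0 := by simp [sddCmp, hab]
        have := mul_nonneg (mul_nonneg (hn0 a) (neg_nonneg.mpr hc)) hb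
        linarith
    have h3 : 0 ≤ ∑ a, n a := Finset.sum_nonneg fun a _ => hn0 a
    linarith
  have hrow : ∀ i, w i * A i i = 1 + ∑ j ∈ univ.erase i, w j * |A i j| := by
    intro i
    have h := hw' i
    rw [← Finset.add_sum_erase _ _ (Finset.mem_univ i)] at h
    have h2 : ∑ x ∈ univ.erase i, sddCmp A i x * w x = -∑ j ∈ univ.erase i, w j * |A i j| := by
      rw [← Finset.sum_neg_distrib]
      refine Finset.sum_congr rfl fun j hj => ?_
      have : i ≠ j := (Finset.ne_of_mem_erase hj).symm
      simp [sddCmp, this]; ring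
    rw [h2] at h
    simp only [sddCmp, if_true] at h
    linarith
  have hge : ∀ i, 1 ≤ w i * A i i := by
    intro i
    rw [hrow i]
    have : 0 ≤ ∑ j ∈ univ.erase i, w j * |A i j| :=
      Finset.sum_nonneg fun j _ => mul_nonneg (hnn j) (abs_nonneg _)
    linarith
  set S := ∑ i, w i * A i i with hS
  have hS0 : 0 ≤ S := Finset.sum_nonneg fun i _ => zero_le_one.trans (hge i)
  have hSi : ∀ i, w i * A i i ≤ S := fun i =>
    Finset.single_le_sum (f := fun i => w i * A i i)
      (fun i _ => zero_le_one.trans (hge i)) (Finset.mem_univ i)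
  refine ⟨1 - 1 / (2 + S), w, ?_, ?_, ?_, ?_⟩
  · have : 1 / (2 + S) < 1 := by rw [div_lt_one (by linarith)]; linarith
    linarith
  · have : 0 < 1 / (2 + S) := by positivity
    linarith
  · intro i
    exact pos_of_mul_pos_left (lt_of_lt_of_le one_pos (hge i)) (hA i).le
  · intro i
    have h1 : 1 / (2 + S) * (w i * A i i) ≤ 1 := by
      rw [div_mul_eq_mul_div, one_mul, div_le_one (by linarith)]
      linarith [hSi i]
    linarith [hrow i]



/-- **Quadratic objectives with pairwise convex decompositions are scaled diagonally
dominant** (consequence of the Perron–Frobenius theorem, cf. Malioutov et al. and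
Section 2.2 of Moallemi–Van Roy).  If a symmetric positive definite matrix `A` decomposes
as `A = Λ + Σ_{{i,j}∈E} B^{ij}` with `Λ` diagonal with positive entries and each `B^{ij}`
positive semidefinite and supported on `{i,j} × {i,j}`, then the quadratic form
`F(x) = (1/2) xᵀAx` is scaled diagonally dominant: there are `λ ∈ (0,1)` and `w > 0`
with `Σ_{j≠i} w_j |A_{ij}| ≤ λ w_i A_{ii}` for all `i`. -/
theorem quadratic_pairwise_decomposable_is_scaled_diagonally_dominant
    {V : Type*} [Fintype V] [DecidableEq V]
    (G : SimpleGraph V) [DecidableRel G.Adj]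
    (A : Matrix V V ℝ) (hAsym : A.IsSymm) (hApd : A.PosDef)
    -- the diagonal part, with strictly positive entries
    (Λ : V → ℝ) (hΛ : ∀ i, 0 < Λ i)
    -- the pairwise parts: positive semidefinite, supported on `{i,j} × {i,j}`
    (B : V → V → Matrix V V ℝ)
    (hBsymm : ∀ i j, G.Adj i j → B i j = B j i)
    (hBpsd : ∀ i j, G.Adj i j → (B i j).PosSemidef)
    (hBsupp : ∀ i j, G.Adj i j → ∀ a b : V,
      ¬((a = i ∨ a = j) ∧ (b = i ∨ b = j)) → B i j a b = 0)
    -- the decomposition `A = Λ + Σ_{{i,j}∈E} B^{ij}` (each edge counted once)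
    (hdecomp : A = Matrix.diagonal Λ +
      (1 / 2 : ℝ) • ∑ i, ∑ j ∈ G.neighborFinset i, B i j) :
    ∃ (lam : ℝ) (w : V → ℝ), 0 < lam ∧ lam < 1 ∧ (∀ i, 0 < w i) ∧
      ∀ i, ∑ j ∈ univ.erase i, w j * |A i j| ≤ lam * w i * A i i := by
  refine sdd_solve A (fun i => hApd.diag_pos) ?_
  intro x hx
  -- entry formula
  have hent : ∀ a b, A a b = Matrix.diagonal Λ a b +
      (1 / 2 : ℝ) * ∑ i, ∑ j ∈ G.neighborFinset i, B i j a b := by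
    intro a b
    conv_lhs => rw [hdecomp]
    simp [Matrix.sum_apply]
  have hcmp : ∀ a b, Matrix.diagonal Λ a b +
      (1 / 2 : ℝ) * ∑ i, ∑ j ∈ G.neighborFinset i, sddCmp (B i j) a b ≤ sddCmp A a b := by
    intro a b
    by_cases hab : a = b
    · subst hab
      simp only [sddCmp, if_true]
      exact (hent a a).ge
    · simp only [sddCmp, hab, if_false]
      rw [hent a b, Matrix.diagonal_apply_ne _ hab]
      simp only [zero_add, Finset.sum_neg_distrib, abs_mul]
      have : |∑ i, ∑ j ∈ G.neighborFinset i, B i j a b| ≤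
          ∑ i, ∑ j ∈ G.neighborFinset i, |B i j a b| :=
        (Finset.abs_sum_le_sum_abs _ _).trans
          (Finset.sum_le_sum fun i _ => Finset.abs_sum_le_sum_abs _ _)
      rw [abs_of_pos (by norm_num : (0 : ℝ) < 1 / 2)]
      linarith
  have hxabs : ∑ a, ∑ b, |x a| * sddCmp A a b * |x b| ≤ ∑ a, ∑ b, x a * sddCmp A a b * x b := by
    refine Finset.sum_le_sum fun a _ => Finset.sum_le_sum fun b _ => ?_
    by_cases hab : a = b
    · subst hab
      apply le_of_eq
      linear_combination sddCmp A a a * abs_mul_abs_self (x a)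
    · have hc : sddCmp A a b ≤ 0 := by simp [sddCmp, hab]
      have h1 : x a * x b ≤ |x a| * |x b| := by rw [← abs_mul]; exact le_abs_self _
      nlinarith
  refine lt_of_lt_of_le ?_ hxabs
  have hlow : ∑ a, ∑ b, |x a| * (Matrix.diagonal Λ a b +
      (1 / 2 : ℝ) * ∑ i, ∑ j ∈ G.neighborFinset i, sddCmp (B i j) a b) * |x b| ≤
      ∑ a, ∑ b, |x a| * sddCmp A a b * |x b| := by
    refine Finset.sum_le_sum fun a _ => Finset.sum_le_sum fun b _ => ?_
    exact mul_le_mul_of_nonneg_right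
      (mul_le_mul_of_nonneg_left (hcmp a b) (abs_nonneg _)) (abs_nonneg _)
  refine lt_of_lt_of_le ?_ hlow
  have hsplit : ∑ a, ∑ b, |x a| * (Matrix.diagonal Λ a b +
      (1 / 2 : ℝ) * ∑ i, ∑ j ∈ G.neighborFinset i, sddCmp (B i j) a b) * |x b| =
      ∑ a, Λ a * (|x a| * |x a|) + (1 / 2 : ℝ) * ∑ i, ∑ j ∈ G.neighborFinset i,
        ∑ a, ∑ b, |x a| * sddCmp (B i j) a b * |x b| := by
    have e1 : ∑ a, Λ a * (|x a| * |x a|) = ∑ a, ∑ b, |x a| * Matrix.diagonal Λ a b * |x b| := by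
      refine Finset.sum_congr rfl fun a _ => ?_
      rw [Finset.sum_eq_single a]
      · rw [Matrix.diagonal_apply_eq]; ring
      · intro b _ hb
        rw [Matrix.diagonal_apply_ne _ hb.symm]; ring
      · simp
    have e2 : ∑ i, ∑ j ∈ G.neighborFinset i, ∑ a, ∑ b, |x a| * sddCmp (B i j) a b * |x b| =
        ∑ a, ∑ b, ∑ i, ∑ j ∈ G.neighborFinset i, |x a| * sddCmp (B i j) a b * |x b| := by
      rw [Finset.sum_sigma', Finset.sum_comm]
      refine Finset.sum_congr rfl fun a _ => ?_
      rw [Finset.sum_comm]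
      refine Finset.sum_congr rfl fun b _ => ?_
      rw [Finset.sum_sigma']
    rw [e1, e2, Finset.mul_sum, ← Finset.sum_add_distrib]
    refine Finset.sum_congr rfl fun a _ => ?_
    rw [Finset.mul_sum, ← Finset.sum_add_distrib]
    refine Finset.sum_congr rfl fun b _ => ?_
    simp only [← Finset.sum_mul, ← Finset.mul_sum]
    ring
  rw [hsplit]
  have hnon : 0 ≤ ∑ i, ∑ j ∈ G.neighborFinset i,
        ∑ a, ∑ b, |x a| * sddCmp (B i j) a b * |x b| := by
    refine Finset.sum_nonneg fun i _ => Finset.sum_nonneg fun j hj => ?_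
    have hadj : G.Adj i j := by simpa using hj
    exact sdd_edge (B i j) (hBpsd i j hadj) i j hadj.ne (hBsupp i j hadj) (fun a => |x a|)
  obtain ⟨k, hk⟩ := Function.ne_iff.mp hx
  have hpos : 0 < ∑ a, Λ a * (|x a| * |x a|) := by
    refine Finset.sum_pos' (fun a _ => mul_nonneg (hΛ a).le
      (mul_nonneg (abs_nonneg _) (abs_nonneg _))) ⟨k, Finset.mem_univ k, ?_⟩
    have : 0 < |x k| := abs_pos.mpr hk
    exact mul_pos (hΛ k) (mul_pos this this)
  linarith
end
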